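/- arXiv:1409.5689 — 5 statements merged into one kernel-verified Lean document; each statement's English description precedes it below -/
import Mathlib

section
/- An operator A on a complex Banach space X is the generator of a holomorphic semigroup if and only if there exists ω ∈ ℝ such that {λ ∈ ℂ : Re λ > ω} ⊆ ρ(A) and sup_{Re λ > ω} ‖λ R(λ,A)‖ < ∞. Moreover, A generates a bounded holomorphic semigroup if and only if this holds with ω = 0. -/
open MeasureTheory Set

variable {X : Type*} [NormedAddCommGroup X] [NormedSpace ℂ X] [CompleteSpace X]

/-- `R` is the resolvent operator `R(l, A) = (l - A)⁻¹` of the (unbounded) operator `A`. -/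
def IsResolventOf (A : X →ₗ.[ℂ] X) (l : ℂ) (R : X →L[ℂ] X) : Prop :=
  (∀ x : X, ∃ hx : R x ∈ A.domain, l • R x - A ⟨R x, hx⟩ = x) ∧
  (∀ y : A.domain, R (l • (y : X) - A y) = (y : X))

/-- `T` is a semigroup of type `(M, ω)`. -/
def IsSemigroupOfType (T : ℝ → X →L[ℂ] X) (M ω : ℝ) : Prop :=
  (∀ x : X, ContinuousOn (fun t => T t x) (Set.Ioi 0)) ∧
  (∀ s t : ℝ, 0 < s → 0 < t → T (s + t) = (T s).comp (T t)) ∧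
  (0 < M ∧ ∀ t : ℝ, 0 < t → ‖T t‖ ≤ M * Real.exp (ω * t)) ∧
  (∀ x : X, (∀ t : ℝ, 0 < t → T t x = 0) → x = 0)

/-- `A` is the generator of the semigroup `T` of type `(M, ω)`. -/
def IsGeneratorOf (A : X →ₗ.[ℂ] X) (T : ℝ → X →L[ℂ] X) (ω : ℝ) : Prop :=
  ∀ l : ℝ, ω < l → ∃ R : X →L[ℂ] X, IsResolventOf A (l : ℂ) R ∧
    ∀ x : X, R x = ∫ t in Set.Ioi (0 : ℝ), Real.exp (-l * t) • T t x

/-- `A` generates the semigroup `T` (of some type `(M, ω)`). -/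
def Generates (A : X →ₗ.[ℂ] X) (T : ℝ → X →L[ℂ] X) : Prop :=
  ∃ M ω : ℝ, IsSemigroupOfType T M ω ∧ IsGeneratorOf A T ω

/-- The open sector `Σ_θ = {r e^{iφ} : r > 0, |φ| < θ}`. -/
def Sector (θ : ℝ) : Set ℂ := {z : ℂ | z ≠ 0 ∧ |Complex.arg z| < θ}

/-- The semigroup `T` is holomorphic: it extends to a holomorphic function on a sector
`Σ_θ` (for some `0 < θ ≤ π/2`) which is bounded on `Σ_θ ∩ {|z| ≤ 1}`. -/
def IsHolomorphicSG (T : ℝ → X →L[ℂ] X) : Prop :=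
  ∃ θ : ℝ, 0 < θ ∧ θ ≤ Real.pi / 2 ∧ ∃ S : ℂ → X →L[ℂ] X,
    DifferentiableOn ℂ S (Sector θ) ∧
    (∀ t : ℝ, 0 < t → S (t : ℂ) = T t) ∧
    (∃ C : ℝ, ∀ z ∈ Sector θ, ‖z‖ ≤ 1 → ‖S z‖ ≤ C)

/-- The semigroup `T` is bounded holomorphic: it extends to a bounded holomorphic function
on a sector `Σ_θ` for some `0 < θ ≤ π/2`. -/
def IsBoundedHolomorphicSG (T : ℝ → X →L[ℂ] X) : Prop :=
  ∃ θ : ℝ, 0 < θ ∧ θ ≤ Real.pi / 2 ∧ ∃ S : ℂ → X →L[ℂ] X,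
    DifferentiableOn ℂ S (Sector θ) ∧
    (∀ t : ℝ, 0 < t → S (t : ℂ) = T t) ∧
    (∃ C : ℝ, ∀ z ∈ Sector θ, ‖S z‖ ≤ C)

/-! If `S` is a semigroup that is holomorphic and bounded on a cone around `(0, ∞)`, then
`d ∫ e^{-tλd} S(td) dt` equals `R(λ, A)` for every direction `d` in the cone; for `λ` in the right
half plane some `d` has `Re (λd) ≥ c ‖λ‖`, which gives `‖λ R(λ, A)‖ ≤ C`. Conversely, such a bound
extends the resolvent, by the Neumann series, to an open sector containing the closed right half
plane without `0`, and `S(z) = (2πi)⁻¹ ∫ eᵛ (v - zA)⁻² dv` over `Re v = 1` is the semigroup: its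
Laplace transform is the resolvent because `S(t) R(μ, A)` has derivative `S(t) A R(μ, A)` and tends
to `R(μ, A)` as `t → 0`. -/

open Filter Topology

/-! ### Cones -/

/-- The open cone `|Im z| < a Re z`, i.e. the sector `Σ_θ` with `a = tan θ`; unlike the sector it is
visibly convex and closed under addition. -/
def cone (a : ℝ) : Set ℂ := {z | |z.im| < a * z.re}

namespace cone

variable {a : ℝ} {z w : ℂ}

lemma re_pos (ha : 0 < a) (hz : z ∈ cone a) : 0 < z.re :=
  pos_of_mul_pos_right ((abs_nonneg _).trans_lt hz) ha.le

lemma ne_zero (hz : z ∈ cone a) : z ≠ 0 := by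
  rintro rfl
  simp [cone] at hz

lemma isOpen (a : ℝ) : IsOpen (cone a) :=
  isOpen_lt (by fun_prop) (by fun_prop)

lemma add_mem (hz : z ∈ cone a) (hw : w ∈ cone a) : z + w ∈ cone a :=
  calc |(z + w).im| ≤ |z.im| + |w.im| := abs_add_le _ _
    _ < a * z.re + a * w.re := add_lt_add hz hw
    _ = a * (z + w).re := by rw [Complex.add_re, mul_add]

lemma ofReal_mul_mem {t : ℝ} (ht : 0 < t) (hz : z ∈ cone a) : (t : ℂ) * z ∈ cone a := by
  change |((t : ℂ) * z).im| < a * ((t : ℂ) * z).re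
  rw [Complex.im_ofReal_mul, Complex.re_ofReal_mul, abs_mul, abs_of_pos ht, mul_left_comm]
  exact mul_lt_mul_of_pos_left hz ht

lemma ofReal_mem (ha : 0 < a) {t : ℝ} (ht : 0 < t) : (t : ℂ) ∈ cone a := by
  change |(t : ℂ).im| < a * (t : ℂ).re
  rw [Complex.ofReal_im, Complex.ofReal_re, abs_zero]
  positivity

lemma convex (a : ℝ) : Convex ℝ (cone a) := by
  refine convex_iff_forall_pos.2 fun z hz w hw s t hs ht _ => ?_
  simpa only [Complex.real_smul] using add_mem (ofReal_mul_mem hs hz) (ofReal_mul_mem ht hw)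

end cone

lemma sector_arctan {a : ℝ} (ha : 0 < a) : Sector (Real.arctan a) = cone a := by
  have key {z : ℂ} (hz : 0 < z.re) : |z.arg| < Real.arctan a ↔ |z.im| < a * z.re := by
    have harg : z.arg = Real.arctan (z.im / z.re) := by
      rw [← Complex.tan_arg, Real.arctan_tan]
      · exact (abs_lt.1 (Complex.abs_arg_lt_pi_div_two_iff.2 (Or.inl hz))).1
      · exact (abs_lt.1 (Complex.abs_arg_lt_pi_div_two_iff.2 (Or.inl hz))).2
    rw [harg, abs_lt, ← Real.arctan_neg, Real.arctan_lt_arctan_iff, Real.arctan_lt_arctan_iff,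
      ← abs_lt, abs_div, abs_of_pos hz, div_lt_iff₀ hz]
  ext z
  constructor
  · rintro ⟨hz0, hz⟩
    have hre : 0 < z.re := (Complex.abs_arg_lt_pi_div_two_iff.1
      (hz.trans (Real.arctan_lt_pi_div_two a))).resolve_right hz0
    exact (key hre).1 hz
  · exact fun hz => ⟨cone.ne_zero hz, (key (cone.re_pos ha hz)).2 hz⟩

lemma exists_cone_subset_sector {θ : ℝ} (h0 : 0 < θ) : ∃ a, 0 < a ∧ cone a ⊆ Sector θ := by
  have hpos : 0 < min θ 1 := lt_min h0 one_pos
  have hlt : min θ 1 < Real.pi / 2 :=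
    (min_le_right _ _).trans_lt (by linarith [Real.pi_gt_three])
  have ha := Real.tan_pos_of_pos_of_lt_pi_div_two hpos hlt
  refine ⟨Real.tan (min θ 1), ha, ?_⟩
  rw [← sector_arctan ha, Real.arctan_tan (by linarith) hlt]
  exact fun z hz => ⟨hz.1, hz.2.trans_le (min_le_left _ _)⟩

section HolomorphicOnCone

variable {F : Type*} [NormedAddCommGroup F] [NormedSpace ℂ F] {a : ℝ}

lemma eqOn_cone_of_eq_ofReal [CompleteSpace F] (ha : 0 < a) {f g : ℂ → F}
    (hf : DifferentiableOn ℂ f (cone a)) (hg : DifferentiableOn ℂ g (cone a))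
    (h : ∀ t : ℝ, 0 < t → f t = g t) : EqOn f g (cone a) := by
  refine (hf.analyticOnNhd (cone.isOpen a)).eqOn_of_preconnected_of_frequently_eq
    (hg.analyticOnNhd (cone.isOpen a)) (cone.convex a).isPreconnected
    (z₀ := ((1 : ℝ) : ℂ)) (cone.ofReal_mem ha one_pos) ?_
  have hlim : Tendsto (fun t : ℝ => (t : ℂ)) (𝓝[>] 1) (𝓝[≠] ((1 : ℝ) : ℂ)) := by
    refine Complex.continuous_ofReal.continuousWithinAt.tendsto_nhdsWithin fun t ht => ?_
    simpa using ne_of_gt ht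
  refine hlim.frequently (Eventually.frequently ?_)
  filter_upwards [self_mem_nhdsWithin] with t ht
  exact h t (one_pos.trans ht)

lemma tendsto_nhdsWithin_cone (ha : 0 < a) {f f' : ℂ → F} {L : F} {D : ℝ}
    (hf : ∀ z ∈ cone a, HasDerivAt f (f' z) z) (hD : ∀ z ∈ cone a, ‖z‖ ≤ 1 → ‖f' z‖ ≤ D)
    (hL : Tendsto (fun t : ℝ => f t) (𝓝[>] 0) (𝓝 L)) : Tendsto f (𝓝[cone a] 0) (𝓝 L) := by
  have hre : Tendsto Complex.re (𝓝[cone a] 0) (𝓝[>] 0) :=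
    Complex.continuous_re.continuousWithinAt.tendsto_nhdsWithin fun z hz => cone.re_pos ha hz
  have hmvt {z : ℂ} (hz : z ∈ cone a) (hz1 : ‖z‖ ≤ 1) : ‖f z - f z.re‖ ≤ D * ‖z - z.re‖ := by
    have hconv : Convex ℝ (cone a ∩ Metric.closedBall 0 1) :=
      (cone.convex a).inter (convex_closedBall _ _)
    refine hconv.norm_image_sub_le_of_norm_hasDerivWithin_le
      (fun w hw => (hf w hw.1).hasDerivWithinAt)
      (fun w hw => hD w hw.1 (mem_closedBall_zero_iff.1 hw.2)) ⟨?_, ?_⟩ ⟨hz, by simpa using hz1⟩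
    · exact cone.ofReal_mem ha (cone.re_pos ha hz)
    · rw [mem_closedBall_zero_iff, Complex.norm_real]
      exact (Complex.abs_re_le_norm z).trans hz1
  have hdiff : Tendsto (fun z : ℂ => f z - f z.re) (𝓝[cone a] 0) (𝓝 0) := by
    refine squeeze_zero_norm' (a := fun z : ℂ => D * ‖z - z.re‖) ?_ ?_
    · filter_upwards [self_mem_nhdsWithin,
        nhdsWithin_le_nhds (Metric.closedBall_mem_nhds (0 : ℂ) one_pos)] with z hz hz1
      exact hmvt hz (mem_closedBall_zero_iff.1 hz1)
    · have : Continuous fun z : ℂ => D * ‖z - z.re‖ := by fun_prop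
      simpa using (this.tendsto 0).mono_left nhdsWithin_le_nhds
  simpa using hdiff.add (hL.comp hre)

end HolomorphicOnCone

/-! ### Resolvents -/

section Resolvent

variable {V : Type*} [NormedAddCommGroup V] [NormedSpace ℂ V]

namespace IsResolventOf

variable {A : V →ₗ.[ℂ] V} {l m : ℂ} {R Q : V →L[ℂ] V}

lemma sub_eq_smul_mul (hR : IsResolventOf A m R) (hQ : IsResolventOf A l Q) :
    Q - R = (m - l) • (Q * R) := by
  ext x
  obtain ⟨hx, hmx⟩ := hR.1 x
  have hlx : l • R x - A ⟨R x, hx⟩ = x - (m - l) • R x := by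
    linear_combination (norm := module) hmx
  have hQx : Q (l • R x - A ⟨R x, hx⟩) = R x := hQ.2 ⟨R x, hx⟩
  rw [hlx, map_sub, map_smul] at hQx
  change Q x - R x = (m - l) • Q (R x)
  linear_combination (norm := module) hQx

lemma eq_zero_of_apply_eq_zero (hR : IsResolventOf A l R) {x : V} (hx : R x = 0) : x = 0 := by
  obtain ⟨hmem, h⟩ := hR.1 x
  have : (⟨R x, hmem⟩ : A.domain) = 0 := Subtype.ext hx
  rw [this, hx, smul_zero, LinearPMap.map_zero, sub_zero] at h
  exact h.symm

lemma isLeftRegular (hR : IsResolventOf A l R) : IsLeftRegular R := by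
  intro P Q h
  ext x
  refine sub_eq_zero.1 (hR.eq_zero_of_apply_eq_zero ?_)
  rw [map_sub, sub_eq_zero]
  exact congr($h x)

/-- `Q (1 + (l - m) R) = R` says `Q (l - A) = 1` on the range of `R`, which is the domain of `A`. -/
lemma of_mul_one_add (hR : IsResolventOf A m R) (hcomm : Commute Q R)
    (h : Q * (1 + (l - m) • R) = R) : IsResolventOf A l Q := by
  have hQR (x : V) : Q x + (l - m) • Q (R x) = R x := by
    simpa [mul_add] using congr($h x)
  have hRQ (x : V) : R (Q x) = Q (R x) := congr($hcomm.symm x)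
  constructor
  · intro x
    have hQx : R (x - (l - m) • Q x) = Q x := by
      rw [map_sub, map_smul, hRQ]
      linear_combination (norm := module) -hQR x
    obtain ⟨hx, hmx⟩ := hR.1 (x - (l - m) • Q x)
    simp only [hQx] at hx hmx
    exact ⟨hx, by linear_combination (norm := module) hmx⟩
  · intro y
    have hy : l • (y : V) - A y = (m • (y : V) - A y) + (l - m) • (y : V) := by module
    have hQy := hQR (m • (y : V) - A y)
    rw [hR.2 y] at hQy
    rw [hy, map_add, map_smul, hQy]

lemma exists_of_norm_smul_le [CompleteSpace V] (hR : IsResolventOf A m R)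
    (h : ‖(m - l) • R‖ ≤ 1 / 2) : ∃ Q : V →L[ℂ] V, IsResolventOf A l Q ∧ ‖Q‖ ≤ 2 * ‖R‖ := by
  set B := (m - l) • R
  set u : (V →L[ℂ] V)ˣ := Units.oneSub B (by linarith)
  have hcomm : Commute R (u : V →L[ℂ] V) :=
    (Commute.one_right R).sub_right ((Commute.refl R).smul_right (m - l))
  set Q : V →L[ℂ] V := R * ↑u⁻¹
  have hQB : Q * (1 - B) = R := u.inv_mul_cancel_right R
  refine ⟨Q, hR.of_mul_one_add ?_ ?_, ?_⟩
  · exact (Commute.refl R).mul_left hcomm.units_inv_right.symm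
  · rw [← neg_sub m l, neg_smul, ← sub_eq_add_neg]
    exact hQB
  · have hQle : ‖Q‖ ≤ ‖R‖ + ‖Q‖ * (1 / 2) :=
      calc ‖Q‖ = ‖R + Q * B‖ := by rw [← hQB, mul_sub, mul_one, sub_add_cancel]
        _ ≤ ‖R‖ + ‖Q * B‖ := norm_add_le _ _
        _ ≤ ‖R‖ + ‖Q‖ * (1 / 2) := by grw [norm_mul_le, h]
    linarith

end IsResolventOf

/-- The half plane `Re λ > ω` lies in the resolvent set of `A`, and `‖λ R(λ, A)‖ ≤ C` on it. -/
def HasResolventEstimate (A : V →ₗ.[ℂ] V) (ω C : ℝ) : Prop :=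
  ∀ l : ℂ, ω < l.re → ∃ R : V →L[ℂ] V, IsResolventOf A l R ∧ ‖l • R‖ ≤ C

end Resolvent

/-! ### Laplace transforms -/

lemma integral_Ioi_of_hasDerivAt_of_tendsto_nhdsGT {F : Type*} [NormedAddCommGroup F]
    [NormedSpace ℝ F] [CompleteSpace F] {f f' : ℝ → F} {a : ℝ} {L m : F}
    (hderiv : ∀ t ∈ Ioi a, HasDerivAt f (f' t) t) (hint : IntegrableOn f' (Ioi a))
    (hL : Tendsto f (𝓝[>] a) (𝓝 L)) (hm : Tendsto f atTop (𝓝 m)) :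
    ∫ t in Ioi a, f' t = m - L := by
  have hupd {t : ℝ} (ht : t ∈ Ioi a) : Function.update f a L =ᶠ[𝓝 t] f := by
    filter_upwards [isOpen_ne.mem_nhds (ne_of_gt ht)] with s hs
    exact Function.update_of_ne hs _ _
  have hcont : ContinuousWithinAt (Function.update f a L) (Ici a) a := by
    rwa [continuousWithinAt_update_same, Ici_sdiff_left]
  have hm' : Tendsto (Function.update f a L) atTop (𝓝 m) := by
    refine hm.congr' ?_
    filter_upwards [eventually_gt_atTop a] with t ht
    exact (Function.update_of_ne ht.ne' _ _).symm
  simpa only [Function.update_self] using integral_Ioi_of_hasDerivAt_of_tendsto hcont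
    (fun t ht => (hderiv t ht).congr_of_eventuallyEq (hupd ht)) hint hm'

lemma norm_cexp_mul_ofReal (l : ℂ) (t : ℝ) : ‖Complex.exp (l * t)‖ = Real.exp (l.re * t) := by
  rw [Complex.norm_exp, Complex.re_mul_ofReal]

lemma hasDerivAt_cexp_mul_ofReal (l : ℂ) (t : ℝ) :
    HasDerivAt (fun s : ℝ => Complex.exp (l * s)) (Complex.exp (l * t) * l) t := by
  have : HasDerivAt (fun z : ℂ => l * z) l t := by simpa using (hasDerivAt_id (t : ℂ)).const_mul l
  exact this.cexp.comp_ofReal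

/-- The Laplace transform `∫₀^∞ e^{-lt} f(t) dt` of a vector-valued function, at a complex point. -/
noncomputable def laplace {F : Type*} [NormedAddCommGroup F] [NormedSpace ℂ F] (f : ℝ → F)
    (l : ℂ) : F :=
  ∫ t in Ioi (0 : ℝ), Complex.exp (-l * t) • f t

lemma laplace_congr {F : Type*} [NormedAddCommGroup F] [NormedSpace ℂ F] {f g : ℝ → F}
    (h : EqOn f g (Ioi 0)) (l : ℂ) : laplace f l = laplace g l :=
  setIntegral_congr_fun measurableSet_Ioi fun t ht => congrArg (Complex.exp (-l * t) • ·) (h ht)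

/-- `f` is continuous on `(0, ∞)` and of exponential type `(M, w)`, so that its Laplace transform
converges for `Re l > w`. -/
structure IsOfExpType {F : Type*} [NormedAddCommGroup F] (f : ℝ → F) (M w : ℝ) : Prop where
  continuousOn : ContinuousOn f (Ioi 0)
  norm_le : ∀ t, 0 < t → ‖f t‖ ≤ M * Real.exp (w * t)

namespace IsOfExpType

section Module

variable {F : Type*} [NormedAddCommGroup F] [NormedSpace ℂ F] {f : ℝ → F} {M w : ℝ} {l : ℂ}

lemma norm_cexp_smul_le (hf : IsOfExpType f M w) (l : ℂ) {t : ℝ} (ht : 0 < t) :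
    ‖Complex.exp (-l * t) • f t‖ ≤ M * Real.exp ((w - l.re) * t) := by
  rw [norm_smul, norm_cexp_mul_ofReal, Complex.neg_re]
  calc Real.exp (-l.re * t) * ‖f t‖ ≤ Real.exp (-l.re * t) * (M * Real.exp (w * t)) := by
        gcongr
        exact hf.norm_le t ht
    _ = M * Real.exp ((w - l.re) * t) := by
        rw [mul_left_comm, ← Real.exp_add]
        ring_nf

lemma integrableOn_cexp_smul (hf : IsOfExpType f M w) (hl : w < l.re) :
    IntegrableOn (fun t : ℝ => Complex.exp (-l * t) • f t) (Ioi 0) := by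
  refine Integrable.mono' ((integrableOn_exp_mul_Ioi (sub_neg.2 hl) 0).const_mul M) ?_ ?_
  · exact (ContinuousOn.smul (by fun_prop) hf.continuousOn).aestronglyMeasurable measurableSet_Ioi
  · filter_upwards [ae_restrict_mem measurableSet_Ioi] with t ht
    exact hf.norm_cexp_smul_le l ht

lemma norm_laplace_le (hf : IsOfExpType f M w) (hl : w < l.re) :
    ‖laplace f l‖ ≤ M / (l.re - w) := by
  have hbound : ‖laplace f l‖ ≤ ∫ t in Ioi (0 : ℝ), M * Real.exp ((w - l.re) * t) := by
    refine norm_integral_le_of_norm_le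
      ((integrableOn_exp_mul_Ioi (sub_neg.2 hl) 0).const_mul M) ?_
    filter_upwards [ae_restrict_mem measurableSet_Ioi] with t ht
    exact hf.norm_cexp_smul_le l ht
  rwa [integral_const_mul, integral_exp_mul_Ioi (sub_neg.2 hl), mul_zero, Real.exp_zero, neg_div,
    ← div_neg, neg_sub, mul_one_div] at hbound

lemma tendsto_cexp_smul_atTop (hf : IsOfExpType f M w) (hl : w < l.re) :
    Tendsto (fun t : ℝ => Complex.exp (-l * t) • f t) atTop (𝓝 0) := by
  have hlin : Tendsto (fun t => (w - l.re) * t) atTop atBot :=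
    tendsto_id.const_mul_atTop_of_neg (sub_neg.2 hl)
  refine squeeze_zero_norm' ?_ (by simpa using (Real.tendsto_exp_atBot.comp hlin).const_mul M)
  filter_upwards [eventually_gt_atTop 0] with t ht
  exact hf.norm_cexp_smul_le l ht

lemma laplace_deriv [CompleteSpace F] {f' : ℝ → F} {M' w' : ℝ} {L : F}
    (hf : IsOfExpType f M w) (hf' : IsOfExpType f' M' w') (hl : w < l.re) (hl' : w' < l.re)
    (hderiv : ∀ t, 0 < t → HasDerivAt f (f' t) t) (hL : Tendsto f (𝓝[>] 0) (𝓝 L)) :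
    laplace f' l = l • laplace f l - L := by
  have hd (t : ℝ) (ht : t ∈ Ioi 0) : HasDerivAt (fun s : ℝ => Complex.exp (-l * s) • f s)
      (Complex.exp (-l * t) • f' t - l • Complex.exp (-l * t) • f t) t := by
    refine ((hasDerivAt_cexp_mul_ofReal (-l) t).smul (hderiv t ht)).congr_deriv ?_
    module
  have hexp : Tendsto (fun t : ℝ => Complex.exp (-l * t)) (𝓝[>] 0) (𝓝 1) := by
    have : Continuous fun t : ℝ => Complex.exp (-l * t) := by fun_prop
    simpa using (this.tendsto 0).mono_left nhdsWithin_le_nhds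
  have hint : IntegrableOn (fun t : ℝ => l • Complex.exp (-l * t) • f t) (Ioi 0) :=
    (hf.integrableOn_cexp_smul hl).smul l
  have hftc := integral_Ioi_of_hasDerivAt_of_tendsto_nhdsGT hd
    ((hf'.integrableOn_cexp_smul hl').sub hint) (by simpa using hexp.smul hL)
    (hf.tendsto_cexp_smul_atTop hl)
  rw [integral_sub (hf'.integrableOn_cexp_smul hl') hint, integral_smul, zero_sub,
    sub_eq_iff_eq_add'] at hftc
  rw [sub_eq_add_neg]
  exact hftc

end Module

lemma mul_const {E : Type*} [NormedRing E] {f : ℝ → E} {M w : ℝ} (hf : IsOfExpType f M w)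
    (B : E) :
    IsOfExpType (fun t => f t * B) (M * ‖B‖) w where
  continuousOn := hf.continuousOn.mul continuousOn_const
  norm_le t ht :=
    calc ‖f t * B‖ ≤ ‖f t‖ * ‖B‖ := norm_mul_le _ _
      _ ≤ M * Real.exp (w * t) * ‖B‖ := by
        gcongr
        exact hf.norm_le t ht
      _ = M * ‖B‖ * Real.exp (w * t) := by ring

section Algebra

variable {E : Type*} [NormedRing E] [NormedAlgebra ℂ E] {f : ℝ → E} {M w : ℝ} {l : ℂ}

lemma mul_laplace (hf : IsOfExpType f M w) (hl : w < l.re) (B : E) :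
    B * laplace f l = laplace (fun t => B * f t) l := by
  rw [laplace, laplace, ← integral_const_mul_of_integrable (hf.integrableOn_cexp_smul hl)]
  simp only [mul_smul_comm]

lemma laplace_mul (hf : IsOfExpType f M w) (hl : w < l.re) (B : E) :
    laplace f l * B = laplace (fun t => f t * B) l := by
  rw [laplace, laplace, ← integral_mul_const_of_integrable (hf.integrableOn_cexp_smul hl)]
  simp only [smul_mul_assoc]

lemma commute_laplace (hf : IsOfExpType f M w) (hl : w < l.re) {B : E}
    (h : ∀ t, 0 < t → Commute B (f t)) : Commute B (laplace f l) := by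
  rw [Commute, SemiconjBy, hf.mul_laplace hl, hf.laplace_mul hl]
  exact laplace_congr (fun t ht => (h t ht).eq) l

lemma laplace_mul_smul_sub [CompleteSpace E] (hf : IsOfExpType f M w) (hl : w < l.re) {R B : E}
    (hderiv : ∀ t, 0 < t → HasDerivAt (fun s => f s * R) (f t * B) t)
    (hzero : Tendsto (fun t => f t * R) (𝓝[>] 0) (𝓝 R)) :
    laplace f l * (l • R - B) = R := by
  have hlaplace := (hf.mul_const R).laplace_deriv (hf.mul_const B) hl hl hderiv hzero
  rw [mul_sub, mul_smul_comm, hf.laplace_mul hl, hf.laplace_mul hl, hlaplace, sub_sub_cancel]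

end Algebra

end IsOfExpType

lemma isOfExpType_ofReal {w : ℝ} (hw : 0 < w) :
    IsOfExpType (fun t : ℝ => (t : ℂ)) w⁻¹ w where
  continuousOn := by fun_prop
  norm_le t ht := by
    rw [Complex.norm_real, Real.norm_of_nonneg ht.le, inv_mul_eq_div, le_div_iff₀' hw]
    linarith [Real.add_one_le_exp (w * t)]

lemma laplace_ofReal {l : ℂ} (hl : 0 < l.re) : laplace (fun t : ℝ => (t : ℂ)) l = (l ^ 2)⁻¹ := by
  have hconst (c : ℂ) : IsOfExpType (fun _ : ℝ => c) ‖c‖ 0 := ⟨by fun_prop, by simp⟩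
  have hone : l * laplace (fun _ : ℝ => (1 : ℂ)) l = 1 := by
    have hzero : laplace (fun _ : ℝ => (0 : ℂ)) l = 0 := by simp [laplace]
    have := (hconst 1).laplace_deriv (hconst 0) hl hl (fun t _ => hasDerivAt_const t 1)
      tendsto_const_nhds
    rw [hzero, smul_eq_mul] at this
    exact sub_eq_zero.1 this.symm
  have hofReal : laplace (fun _ : ℝ => (1 : ℂ)) l = l * laplace (fun t : ℝ => (t : ℂ)) l := by
    simpa using (isOfExpType_ofReal (half_pos hl)).laplace_deriv (hconst 1) (half_lt_self hl) hl
      (fun t _ => Complex.ofRealCLM.hasDerivAt)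
      ((Complex.continuous_ofReal.tendsto 0).mono_left nhdsWithin_le_nhds)
  rw [hofReal, ← mul_assoc, ← pow_two] at hone
  exact eq_inv_of_mul_eq_one_right hone

lemma laplace_cexp_smul {F : Type*} [NormedAddCommGroup F] [NormedSpace ℂ F] (f : ℝ → F)
    (w l : ℂ) : laplace (fun t => Complex.exp (w * t) • f t) l = laplace f (l - w) := by
  refine integral_congr_ae (ae_of_all _ fun t => ?_)
  simp only [smul_smul, ← Complex.exp_add]
  ring_nf

lemma IsOfExpType.laplace_ofReal_apply {V : Type*} [NormedAddCommGroup V] [NormedSpace ℂ V]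
    {T : ℝ → V →L[ℂ] V} {M w : ℝ} (hT : IsOfExpType T M w) {l : ℝ} (hl : w < l)
    (x : V) : laplace T l x = ∫ t in Ioi (0 : ℝ), Real.exp (-l * t) • T t x := by
  rw [laplace, ContinuousLinearMap.integral_apply (hT.integrableOn_cexp_smul (by simpa using hl))]
  refine setIntegral_congr_fun measurableSet_Ioi fun t _ => ?_
  change Complex.exp (-l * t) • T t x = Real.exp (-l * t) • T t x
  rw [← Complex.coe_smul, Complex.ofReal_exp]
  push_cast
  rfl

section IntegralIoi

variable {F : Type*} [NormedAddCommGroup F] [NormedSpace ℝ F] {f : ℝ → F} {a s : ℝ}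

lemma integral_Ioi_eq_sub_intervalIntegral (hf : IntegrableOn f (Ioi a)) (hs : a ≤ s) :
    ∫ t in Ioi s, f t = (∫ t in Ioi a, f t) - ∫ t in a..s, f t :=
  eq_sub_of_add_eq' (intervalIntegral.integral_interval_add_Ioi hf
    (hf.mono_set (Ioi_subset_Ioi hs)))

lemma hasDerivAt_integral_Ioi [CompleteSpace F] (hf : IntegrableOn f (Ioi a))
    (hc : ContinuousOn f (Ioi a)) (hs : a < s) :
    HasDerivAt (fun s => ∫ t in Ioi s, f t) (-f s) s := by
  have hprim : HasDerivAt (fun s => ∫ t in a..s, f t) (f s) s :=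
    intervalIntegral.integral_hasDerivAt_right
      ((intervalIntegrable_iff_integrableOn_Ioc_of_le hs.le).2 (hf.mono_set Ioc_subset_Ioi_self))
      (hc.stronglyMeasurableAtFilter isOpen_Ioi s hs) (hc.continuousAt (Ioi_mem_nhds hs))
  refine (hprim.const_sub (∫ t in Ioi a, f t)).congr_of_eventuallyEq ?_
  filter_upwards [Ioi_mem_nhds hs] with r hr
  exact integral_Ioi_eq_sub_intervalIntegral hf (le_of_lt hr)

lemma tendsto_integral_Ioi_nhdsGT (hf : IntegrableOn f (Ioi a)) :
    Tendsto (fun s => ∫ t in Ioi s, f t) (𝓝[>] a) (𝓝 (∫ t in Ioi a, f t)) := by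
  have hprim : Tendsto (fun s => ∫ t in a..s, f t) (𝓝[>] a) (𝓝 0) := by
    have hint : IntegrableOn f (Icc a (a + 1)) :=
      (integrableOn_Icc_iff_integrableOn_Ioc (by finiteness)).2 (hf.mono_set Ioc_subset_Ioi_self)
    rw [← uIcc_of_le (by linarith)] at hint
    have := intervalIntegral.continuousOn_primitive_interval hint a left_mem_uIcc
    rw [ContinuousWithinAt, intervalIntegral.integral_same] at this
    refine this.mono_left (nhdsWithin_le_iff.2 ?_)
    rw [uIcc_of_le (by linarith)]
    exact Icc_mem_nhdsGT (by linarith)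
  have hsub := (tendsto_const_nhds (x := ∫ t in Ioi a, f t)).sub hprim
  rw [sub_zero] at hsub
  refine hsub.congr' ?_
  filter_upwards [self_mem_nhdsWithin] with r hr
  exact (integral_Ioi_eq_sub_intervalIntegral hf (le_of_lt hr)).symm

end IntegralIoi

section SemigroupLaplace

variable {E : Type*} [NormedRing E] [NormedAlgebra ℂ E] {T : ℝ → E} {M w s : ℝ} {l : ℂ}

lemma mul_laplace_of_semigroup (hT : IsOfExpType T M w)
    (hsg : ∀ s t, 0 < s → 0 < t → T (s + t) = T s * T t) (hl : w < l.re) (hs : 0 < s) :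
    T s * laplace T l = Complex.exp (l * s) • ∫ t in Ioi s, Complex.exp (-l * t) • T t := by
  have hshift : ∫ t in Ioi s, Complex.exp (-l * t) • T t =
      ∫ t in Ioi (0 : ℝ), Complex.exp (-l * ↑(t + s)) • T (t + s) := by
    simpa using ((measurePreserving_add_right volume s).setIntegral_preimage_emb
      (measurableEmbedding_addRight s) (fun t => Complex.exp (-l * t) • T t) (Ioi s)).symm
  rw [hT.mul_laplace hl, hshift, ← integral_smul]
  refine setIntegral_congr_fun measurableSet_Ioi fun t ht => ?_
  simp only [smul_smul, ← Complex.exp_add, add_comm t s, hsg s t hs ht]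
  push_cast
  ring_nf

lemma hasDerivAt_mul_laplace_of_semigroup [CompleteSpace E] (hT : IsOfExpType T M w)
    (hsg : ∀ s t, 0 < s → 0 < t → T (s + t) = T s * T t) (hl : w < l.re) (hs : 0 < s) :
    HasDerivAt (fun s => T s * laplace T l) (T s * (l • laplace T l - 1)) s := by
  have hint := hasDerivAt_integral_Ioi (hT.integrableOn_cexp_smul hl)
    (ContinuousOn.smul (by fun_prop) hT.continuousOn) hs
  have hprod := ((hasDerivAt_cexp_mul_ofReal l s).smul hint).congr_of_eventuallyEq
    (f₁ := fun s => T s * laplace T l) (by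
      filter_upwards [Ioi_mem_nhds hs] with r hr
      exact mul_laplace_of_semigroup hT hsg hl hr)
  refine hprod.congr_deriv ?_
  rw [mul_sub, mul_smul_comm, mul_one, mul_laplace_of_semigroup hT hsg hl hs, smul_neg, smul_smul,
    smul_smul, ← Complex.exp_add, neg_mul, add_neg_cancel, Complex.exp_zero, one_smul,
    mul_comm l (Complex.exp _), neg_add_eq_sub]

lemma tendsto_mul_laplace_of_semigroup (hT : IsOfExpType T M w)
    (hsg : ∀ s t, 0 < s → 0 < t → T (s + t) = T s * T t) (hl : w < l.re) :
    Tendsto (fun s => T s * laplace T l) (𝓝[>] 0) (𝓝 (laplace T l)) := by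
  have hexp : Tendsto (fun s : ℝ => Complex.exp (l * s)) (𝓝[>] 0) (𝓝 1) := by
    have : Continuous fun s : ℝ => Complex.exp (l * s) := by fun_prop
    simpa using (this.tendsto 0).mono_left nhdsWithin_le_nhds
  have hlim := hexp.smul (tendsto_integral_Ioi_nhdsGT (hT.integrableOn_cexp_smul hl))
  rw [one_smul] at hlim
  refine hlim.congr' ?_
  filter_upwards [self_mem_nhdsWithin] with s hs
  exact (mul_laplace_of_semigroup hT hsg hl hs).symm

end SemigroupLaplace

/-! ### Resolvent estimates for holomorphic semigroups -/

lemma hasDerivAt_comp_ofReal_mul {F : Type*} [NormedAddCommGroup F] [NormedSpace ℂ F] {f : ℂ → F}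
    {f' : F} {t : ℝ} {d : ℂ} (hf : HasDerivAt f f' (t * d)) :
    HasDerivAt (fun s : ℝ => f (s * d)) (d • f') t := by
  have hray : HasDerivAt (fun s : ℝ => (s : ℂ) * d) d t := by
    simpa using (Complex.ofRealCLM.hasDerivAt (x := t)).mul_const d
  exact hf.scomp t hray

/-- `S` is a holomorphic solution of the semigroup law on `cone a`; nothing is required as
`z → 0`. -/
structure IsConeSemigroup {E : Type*} [NormedRing E] [NormedAlgebra ℂ E] (S : ℂ → E) (a : ℝ) :
    Prop where
  pos : 0 < a
  differentiableOn : DifferentiableOn ℂ S (cone a)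
  map_add : ∀ z ∈ cone a, ∀ w ∈ cone a, S (z + w) = S z * S w

namespace IsConeSemigroup

variable {E : Type*} [NormedRing E] [NormedAlgebra ℂ E] {S : ℂ → E} {a M w : ℝ} {m l d z : ℂ}

lemma of_map_add_ofReal [CompleteSpace E] (ha : 0 < a) (hS : DifferentiableOn ℂ S (cone a))
    (h : ∀ s t : ℝ, 0 < s → 0 < t → S (s + t) = S s * S t) : IsConeSemigroup S a := by
  have hadd_left {z : ℂ} (hz : z ∈ cone a) : DifferentiableOn ℂ (fun w => S (z + w)) (cone a) :=
    hS.comp (by fun_prop) fun w hw => cone.add_mem hz hw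
  have hadd_right {z : ℂ} (hz : z ∈ cone a) : DifferentiableOn ℂ (fun w => S (w + z)) (cone a) :=
    hS.comp (by fun_prop) fun w hw => cone.add_mem hw hz
  have hreal {s : ℝ} (hs : 0 < s) : EqOn (fun w => S (s + w)) (fun w => S s * S w) (cone a) :=
    eqOn_cone_of_eq_ofReal ha (hadd_left (cone.ofReal_mem ha hs)) (hS.const_mul _)
      fun t ht => h s t hs ht
  refine ⟨ha, hS, fun z hz w hw => ?_⟩
  exact eqOn_cone_of_eq_ofReal ha (hadd_right hw) (hS.mul_const _) (fun t ht => hreal ht hw) hz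

lemma map_natCast_mul (hS : IsConeSemigroup S a) (hz : z ∈ cone a) (n : ℕ) :
    S (((n + 1 : ℕ) : ℂ) * z) = S z ^ (n + 1) := by
  induction n with
  | zero => simp
  | succ n ih =>
    have hmem : ((n + 1 : ℕ) : ℂ) * z ∈ cone a := by
      simpa using cone.ofReal_mul_mem (t := (n + 1 : ℕ)) (by positivity) hz
    rw [pow_succ, ← ih, ← hS.map_add _ hmem z hz]
    push_cast
    ring_nf

lemma exists_norm_le_exp (hS : IsConeSemigroup S a) {C : ℝ}
    (hC : ∀ z ∈ cone a, ‖z‖ ≤ 1 → ‖S z‖ ≤ C) :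
    ∃ M w : ℝ, 0 ≤ w ∧ ∀ z ∈ cone a, ‖S z‖ ≤ M * Real.exp (w * ‖z‖) := by
  have hD1 : 1 ≤ max C 1 := le_max_right _ _
  refine ⟨max C 1, Real.log (max C 1), Real.log_nonneg hD1, fun z hz => ?_⟩
  set D := max C 1
  set n := ⌊‖z‖⌋₊
  have hpos : (0 : ℝ) < (n + 1 : ℕ) := by positivity
  set u : ℂ := ((((n + 1 : ℕ) : ℝ)⁻¹ : ℝ) : ℂ) * z with hu
  have hu_mem : u ∈ cone a := cone.ofReal_mul_mem (inv_pos.2 hpos) hz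
  have hu_norm : ‖u‖ ≤ 1 := by
    rw [hu, norm_mul, Complex.norm_real, norm_inv, Real.norm_of_nonneg hpos.le,
      inv_mul_le_one₀ hpos]
    exact_mod_cast (Nat.lt_floor_add_one ‖z‖).le
  have hz_eq : ((n + 1 : ℕ) : ℂ) * u = z := by
    rw [hu, Complex.ofReal_inv, Complex.ofReal_natCast,
      mul_inv_cancel_left₀ (by exact_mod_cast n.succ_ne_zero)]
  have hexp : Real.exp (Real.log D * n) = D ^ n := by
    rw [mul_comm, Real.exp_nat_mul, Real.exp_log (one_pos.trans_le hD1)]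
  calc ‖S z‖ = ‖S u ^ (n + 1)‖ := by rw [← hS.map_natCast_mul hu_mem, hz_eq]
    _ ≤ ‖S u‖ ^ (n + 1) := norm_pow_le' _ n.succ_pos
    _ ≤ D ^ (n + 1) := by
      gcongr
      exact (hC u hu_mem hu_norm).trans (le_max_left _ _)
    _ = D * Real.exp (Real.log D * n) := by rw [hexp, pow_succ']
    _ ≤ D * Real.exp (Real.log D * ‖z‖) := by
      gcongr
      · exact Real.log_nonneg hD1
      · exact Nat.floor_le (norm_nonneg z)

lemma isOfExpType_ray (hS : IsConeSemigroup S a)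
    (hb : ∀ z ∈ cone a, ‖S z‖ ≤ M * Real.exp (w * ‖z‖)) (hd : d ∈ cone a) :
    IsOfExpType (fun t : ℝ => S (t * d)) M (w * ‖d‖) where
  continuousOn := hS.differentiableOn.continuousOn.comp (by fun_prop) fun _ ht =>
    cone.ofReal_mul_mem ht hd
  norm_le t ht := by
    refine (hb _ (cone.ofReal_mul_mem ht hd)).trans_eq ?_
    rw [norm_mul, Complex.norm_real, Real.norm_of_nonneg ht.le, mul_comm t, mul_assoc]

lemma isOfExpType_ofReal (hS : IsConeSemigroup S a)
    (hb : ∀ z ∈ cone a, ‖S z‖ ≤ M * Real.exp (w * ‖z‖)) :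
    IsOfExpType (fun t : ℝ => S t) M w := by
  simpa using hS.isOfExpType_ray hb (d := ((1 : ℝ) : ℂ)) (cone.ofReal_mem hS.pos one_pos)

lemma commute_laplace (hS : IsConeSemigroup S a)
    (hb : ∀ z ∈ cone a, ‖S z‖ ≤ M * Real.exp (w * ‖z‖)) (hm : w < m.re) (hz : z ∈ cone a) :
    Commute (S z) (laplace (fun t : ℝ => S t) m) := by
  refine (hS.isOfExpType_ofReal hb).commute_laplace hm fun t ht => ?_
  have ht' := cone.ofReal_mem hS.pos ht
  rw [Commute, SemiconjBy, ← hS.map_add z hz t ht', ← hS.map_add t ht' z hz, add_comm]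

lemma map_add_ofReal (hS : IsConeSemigroup S a) (s t : ℝ) (hs : 0 < s) (ht : 0 < t) :
    S ((s + t : ℝ) : ℂ) = S s * S t := by
  rw [Complex.ofReal_add]
  exact hS.map_add s (cone.ofReal_mem hS.pos hs) t (cone.ofReal_mem hS.pos ht)

variable [CompleteSpace E]

lemma hasDerivAt_mul_laplace (hS : IsConeSemigroup S a)
    (hb : ∀ z ∈ cone a, ‖S z‖ ≤ M * Real.exp (w * ‖z‖)) (hm : w < m.re) (hz : z ∈ cone a) :
    HasDerivAt (fun z => S z * laplace (fun t : ℝ => S t) m)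
      (S z * (m • laplace (fun t : ℝ => S t) m - 1)) z := by
  set R := laplace (fun t : ℝ => S t) m
  have hopen := cone.isOpen a
  have hderiv {z : ℂ} (hz : z ∈ cone a) : HasDerivAt (fun z => S z * R) (deriv S z * R) z :=
    (hS.differentiableOn.differentiableAt (hopen.mem_nhds hz)).hasDerivAt.mul_const R
  have heq : EqOn (fun z => deriv S z * R) (fun z => S z * (m • R - 1)) (cone a) := by
    refine eqOn_cone_of_eq_ofReal hS.pos ((hS.differentiableOn.deriv hopen).mul_const R)
      (hS.differentiableOn.mul_const _) fun t ht => ?_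
    have hreal : HasDerivAt (fun s : ℝ => S s * R) (deriv S t * R) t := by
      simpa using hasDerivAt_comp_ofReal_mul (d := 1)
        (by simpa using hderiv (cone.ofReal_mem hS.pos ht))
    exact hreal.unique
      (hasDerivAt_mul_laplace_of_semigroup (hS.isOfExpType_ofReal hb) hS.map_add_ofReal hm ht)
  exact (hderiv hz).congr_deriv (heq hz)

lemma tendsto_mul_laplace (hS : IsConeSemigroup S a) (hw : 0 ≤ w)
    (hb : ∀ z ∈ cone a, ‖S z‖ ≤ M * Real.exp (w * ‖z‖)) (hm : w < m.re) :
    Tendsto (fun z => S z * laplace (fun t : ℝ => S t) m) (𝓝[cone a] 0)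
      (𝓝 (laplace (fun t : ℝ => S t) m)) := by
  set R := laplace (fun t : ℝ => S t) m
  have hM : 0 ≤ M := nonneg_of_mul_nonneg_left
    ((norm_nonneg _).trans (hb _ (cone.ofReal_mem hS.pos one_pos))) (Real.exp_pos _)
  refine tendsto_nhdsWithin_cone hS.pos (D := M * Real.exp w * ‖m • R - 1‖)
    (fun z hz => hS.hasDerivAt_mul_laplace hb hm hz) (fun z hz hz1 => ?_)
    (tendsto_mul_laplace_of_semigroup (hS.isOfExpType_ofReal hb) hS.map_add_ofReal hm)
  calc ‖S z * (m • R - 1)‖ ≤ ‖S z‖ * ‖m • R - 1‖ := norm_mul_le _ _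
    _ ≤ M * Real.exp w * ‖m • R - 1‖ := by
      gcongr
      grw [hb z hz]
      gcongr
      exact mul_le_of_le_one_right hw hz1

/-- Rotating the path of integration `t ↦ t` to the ray `t ↦ t d` gives the resolvent at all `l`
with `Re (l d) > w ‖d‖`. -/
lemma smul_laplace_ray_mul (hS : IsConeSemigroup S a) (hw : 0 ≤ w)
    (hb : ∀ z ∈ cone a, ‖S z‖ ≤ M * Real.exp (w * ‖z‖)) (hm : w < m.re) (hd : d ∈ cone a)
    (hl : w * ‖d‖ < (l * d).re) :
    d • laplace (fun t : ℝ => S (t * d)) (l * d) *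
      (1 + (l - m) • laplace (fun t : ℝ => S t) m) = laplace (fun t : ℝ => S t) m := by
  set R := laplace (fun t : ℝ => S t) m
  have hderiv (t : ℝ) (ht : 0 < t) : HasDerivAt (fun s : ℝ => S (s * d) * R)
      (S (t * d) * (d • (m • R - 1))) t := by
    rw [mul_smul_comm]
    exact hasDerivAt_comp_ofReal_mul (hS.hasDerivAt_mul_laplace hb hm (cone.ofReal_mul_mem ht hd))
  have hzero : Tendsto (fun t : ℝ => S (t * d) * R) (𝓝[>] 0) (𝓝 R) := by
    refine (hS.tendsto_mul_laplace hw hb hm).comp ?_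
    have hcont : Continuous fun t : ℝ => (t : ℂ) * d := by fun_prop
    simpa using hcont.continuousWithinAt.tendsto_nhdsWithin (x := 0) (s := Ioi 0) (t := cone a)
      fun t ht => cone.ofReal_mul_mem ht hd
  have hlaplace := (hS.isOfExpType_ray hb hd).laplace_mul_smul_sub hl hderiv hzero
  conv_rhs => rw [← hlaplace]
  rw [smul_mul_assoc, ← mul_smul_comm]
  congr 1
  module

end IsConeSemigroup

lemma exists_mem_cone_le_re_mul {b : ℝ} (hb : 0 < b) {l : ℂ} (hl : 0 < l.re) :
    ∃ d ∈ cone (2 * b), ‖d‖ ≤ 1 + b ∧ min 1 b * ‖l‖ ≤ (l * d).re := by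
  have key {σ : ℝ} (hσ : |σ| = 1) (hl_im : -σ * l.im = |l.im|) :
      ∃ d ∈ cone (2 * b), ‖d‖ ≤ 1 + b ∧ min 1 b * ‖l‖ ≤ (l * d).re := by
    refine ⟨⟨1, σ * b⟩, ?_, ?_, ?_⟩
    · change |σ * b| < 2 * b * 1
      rw [abs_mul, hσ, abs_of_pos hb]
      linarith
    · refine (Complex.norm_le_abs_re_add_abs_im _).trans ?_
      simp [abs_mul, hσ, abs_of_pos hb]
    · calc min 1 b * ‖l‖ ≤ min 1 b * (l.re + |l.im|) := by
            gcongr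
            exact (Complex.norm_le_abs_re_add_abs_im l).trans_eq (by rw [abs_of_pos hl])
        _ ≤ 1 * l.re + b * |l.im| := by
            rw [mul_add]
            gcongr
            exacts [min_le_left _ _, min_le_right _ _]
        _ = (l * ⟨1, σ * b⟩).re := by
            rw [← hl_im, Complex.mul_re]
            ring
  rcases le_total 0 l.im with h | h
  · exact key (σ := -1) (by simp) (by simp [abs_of_nonneg h])
  · exact key (σ := 1) (by simp) (by simp [abs_of_nonpos h])

lemma IsConeSemigroup.exists_isResolventOf {V : Type*} [NormedAddCommGroup V] [NormedSpace ℂ V]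
    [CompleteSpace V] {A : V →ₗ.[ℂ] V} {S : ℂ → V →L[ℂ] V} {a M w : ℝ} {m : ℂ}
    (hS : IsConeSemigroup S a) (hw : 0 ≤ w)
    (hb : ∀ z ∈ cone a, ‖S z‖ ≤ M * Real.exp (w * ‖z‖)) (hm : w < m.re)
    (hR : IsResolventOf A m (laplace (fun t : ℝ => S t) m)) :
    ∃ c > 0, ∃ C : ℝ, ∀ l : ℂ, 0 < l.re → 2 * w < c * ‖l‖ →
      ∃ Q : V →L[ℂ] V, IsResolventOf A l Q ∧ ‖l • Q‖ ≤ C := by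
  set b := a / 2 with hb_def
  have hb0 : 0 < b := half_pos hS.pos
  set k := min 1 b
  have hk0 : 0 < k := lt_min one_pos hb0
  have hM : 0 ≤ M := nonneg_of_mul_nonneg_left
    ((norm_nonneg _).trans (hb _ (cone.ofReal_mem hS.pos one_pos))) (Real.exp_pos _)
  refine ⟨k / (1 + b), by positivity, (1 + b) * (2 * M / k), fun l hl hlw => ?_⟩
  obtain ⟨d, hd, hd_norm, hd_re⟩ := exists_mem_cone_le_re_mul hb0 hl
  rw [hb_def, mul_div_cancel₀ a two_ne_zero] at hd
  have hl0 : 0 < ‖l‖ := hl.trans_le (Complex.re_le_norm l)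
  have hkl : 0 < k * ‖l‖ := mul_pos hk0 hl0
  have hwd : 2 * (w * ‖d‖) < k * ‖l‖ := by
    rw [div_mul_eq_mul_div, lt_div_iff₀ (by positivity)] at hlw
    nlinarith
  set Q₀ := laplace (fun t : ℝ => S (t * d)) (l * d)
  have hray := hS.isOfExpType_ray hb hd
  have hld : w * ‖d‖ < (l * d).re := by linarith
  have hQ₀_norm : ‖Q₀‖ ≤ 2 * M / (k * ‖l‖) := by
    refine (hray.norm_laplace_le hld).trans ?_
    rw [div_le_div_iff₀ (by linarith) hkl]
    nlinarith
  have hcomm : Commute (d • Q₀) (laplace (fun t : ℝ => S t) m) :=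
    (hray.commute_laplace hld fun t ht =>
      (hS.commute_laplace hb hm (cone.ofReal_mul_mem ht hd)).symm).symm.smul_left d
  refine ⟨d • Q₀, hR.of_mul_one_add hcomm (hS.smul_laplace_ray_mul hw hb hm hd hld), ?_⟩
  calc ‖l • d • Q₀‖ = ‖l‖ * (‖d‖ * ‖Q₀‖) := by rw [norm_smul, norm_smul]
    _ ≤ ‖l‖ * ((1 + b) * (2 * M / (k * ‖l‖))) := by gcongr
    _ = (1 + b) * (2 * M / k) := by field_simp

section Generator

variable {V : Type*} [NormedAddCommGroup V] [NormedSpace ℂ V] [CompleteSpace V]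
  {A : V →ₗ.[ℂ] V} {T : ℝ → V →L[ℂ] V} {S : ℂ → V →L[ℂ] V} {a : ℝ}

lemma Generates.isConeSemigroup (hA : Generates A T) (ha : 0 < a)
    (hS : DifferentiableOn ℂ S (cone a)) (hST : ∀ t : ℝ, 0 < t → S t = T t) :
    IsConeSemigroup S a := by
  obtain ⟨M, ω, ⟨-, hadd, -, -⟩, -⟩ := hA
  refine .of_map_add_ofReal ha hS fun s t hs ht => ?_
  rw [hST s hs, hST t ht, ← Complex.ofReal_add, hST _ (add_pos hs ht)]
  exact hadd s t hs ht

lemma Generates.hasResolventEstimate (hA : Generates A T) (hS : IsConeSemigroup S a)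
    (hST : ∀ t : ℝ, 0 < t → S t = T t) {M w : ℝ} (hw : 0 ≤ w)
    (hb : ∀ z ∈ cone a, ‖S z‖ ≤ M * Real.exp (w * ‖z‖)) :
    ∃ c > 0, ∃ C, HasResolventEstimate A (2 * w / c) C := by
  obtain ⟨_, ω, -, hgen⟩ := hA
  set m := max ω w + 1
  have hωm : ω < m := (le_max_left _ _).trans_lt (lt_add_one _)
  have hwm : w < m := (le_max_right _ _).trans_lt (lt_add_one _)
  obtain ⟨R, hR, hR_int⟩ := hgen m hωm
  have hR_eq : R = laplace (fun t : ℝ => S t) m := by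
    ext x
    rw [(hS.isOfExpType_ofReal hb).laplace_ofReal_apply hwm, hR_int]
    refine setIntegral_congr_fun measurableSet_Ioi fun t ht => ?_
    simp only [hST t ht]
  obtain ⟨c, hc, C, hC⟩ := hS.exists_isResolventOf hw hb (by simpa using hwm) (hR_eq ▸ hR)
  refine ⟨c, hc, C, fun l hl => hC l ((by positivity : (0 : ℝ) ≤ 2 * w / c).trans_lt hl) ?_⟩
  rw [div_lt_iff₀' hc] at hl
  exact hl.trans_le (by gcongr; exact Complex.re_le_norm l)

lemma Generates.exists_hasResolventEstimate (hA : Generates A T) (hT : IsHolomorphicSG T) :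
    ∃ ω C, HasResolventEstimate A ω C := by
  obtain ⟨θ, hθ, -, S, hS, hST, C, hC⟩ := hT
  obtain ⟨a, ha, haθ⟩ := exists_cone_subset_sector hθ
  have hcone := hA.isConeSemigroup ha (hS.mono haθ) hST
  obtain ⟨M, w, hw, hb⟩ := hcone.exists_norm_le_exp fun z hz => hC z (haθ hz)
  obtain ⟨c, -, hc⟩ := hA.hasResolventEstimate hcone hST hw hb
  exact ⟨_, hc⟩

lemma Generates.exists_hasResolventEstimate_zero (hA : Generates A T)
    (hT : IsBoundedHolomorphicSG T) : ∃ C, HasResolventEstimate A 0 C := by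
  obtain ⟨θ, hθ, -, S, hS, hST, C, hC⟩ := hT
  obtain ⟨a, ha, haθ⟩ := exists_cone_subset_sector hθ
  have hcone := hA.isConeSemigroup ha (hS.mono haθ) hST
  obtain ⟨c, -, hc⟩ := hA.hasResolventEstimate hcone hST le_rfl (M := C) fun z hz => by
    simpa using hC z (haθ hz)
  simpa using hc

end Generator

/-! ### Integrals over the line `Re v = 1` -/

/-- The vertical line `Re v = 1`, along which Laplace transforms are inverted. -/
def vline (y : ℝ) : ℂ := 1 + y * Complex.I

lemma vline_re (y : ℝ) : (vline y).re = 1 := by simp [vline]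

lemma norm_sq_vline (y : ℝ) : ‖vline y‖ ^ 2 = 1 + y ^ 2 := by
  rw [← Complex.normSq_eq_norm_sq, Complex.normSq_apply]
  simp [vline, pow_two]

lemma vline_ne_zero (y : ℝ) : vline y ≠ 0 := fun h => by simpa [h] using vline_re y

lemma one_le_norm_vline (y : ℝ) : 1 ≤ ‖vline y‖ :=
  (vline_re y).symm.trans_le (Complex.re_le_norm _)

lemma hasDerivAt_vline (y : ℝ) : HasDerivAt vline Complex.I y := by
  have := ((Complex.ofRealCLM.hasDerivAt (x := y)).mul_const Complex.I).const_add 1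
  rwa [Complex.ofRealCLM_apply, Complex.ofReal_one, one_mul] at this

lemma continuous_vline : Continuous vline := by
  unfold vline
  fun_prop

lemma norm_cexp_vline (y : ℝ) : ‖Complex.exp (vline y)‖ = Real.exp 1 := by
  rw [Complex.norm_exp, vline_re]

/-- `g` is continuous and `‖g‖ ≤ D / |v|²` along the line `v = 1 + iy`, so that
`∫ eᵛ g(v) dv` converges absolutely. -/
structure HasQuadraticDecay {F : Type*} [NormedAddCommGroup F] (g : ℝ → F) (D : ℝ) : Prop where
  continuous : Continuous g
  norm_le : ∀ y, ‖g y‖ ≤ D / ‖vline y‖ ^ 2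

/-- The Bromwich integral `(2πi)⁻¹ ∫ eᵛ g(v) dv` over the line `v = 1 + iy`, parametrised by `y`. -/
noncomputable def bromwich {F : Type*} [NormedAddCommGroup F] [NormedSpace ℂ F] (g : ℝ → F) : F :=
  ((2 * Real.pi : ℝ) : ℂ)⁻¹ • ∫ y : ℝ, Complex.exp (vline y) • g y

lemma bromwich_const_smul {F : Type*} [NormedAddCommGroup F] [NormedSpace ℂ F] (c : ℂ)
    (g : ℝ → F) : bromwich (fun y => c • g y) = c • bromwich g := by
  simp only [bromwich, smul_comm _ c, integral_smul]

namespace HasQuadraticDecay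

lemma sub {F : Type*} [NormedAddCommGroup F] {g h : ℝ → F} {D D' : ℝ}
    (hg : HasQuadraticDecay g D) (hh : HasQuadraticDecay h D') :
    HasQuadraticDecay (fun y => g y - h y) (D + D') where
  continuous := hg.continuous.sub hh.continuous
  norm_le y := by
    rw [add_div]
    exact (norm_sub_le _ _).trans (add_le_add (hg.norm_le y) (hh.norm_le y))

lemma norm_le_mul_inv {F : Type*} [NormedAddCommGroup F] {g : ℝ → F} {D : ℝ}
    (hg : HasQuadraticDecay g D) (y : ℝ) : ‖g y‖ ≤ D * (1 + y ^ 2)⁻¹ := by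
  rw [← norm_sq_vline, ← div_eq_mul_inv]
  exact hg.norm_le y

lemma integrable {F : Type*} [NormedAddCommGroup F] {g : ℝ → F} {D : ℝ}
    (hg : HasQuadraticDecay g D) : Integrable g :=
  (integrable_inv_one_add_sq.const_mul D).mono' hg.continuous.aestronglyMeasurable
    (ae_of_all _ hg.norm_le_mul_inv)

lemma mono {F : Type*} [NormedAddCommGroup F] {g : ℝ → F} {D D' : ℝ}
    (hg : HasQuadraticDecay g D) (hD : D ≤ D') : HasQuadraticDecay g D' where
  continuous := hg.continuous
  norm_le y := (hg.norm_le y).trans (by gcongr)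

section Module

variable {F : Type*} [NormedAddCommGroup F] [NormedSpace ℂ F] {g h : ℝ → F} {D D' : ℝ}

lemma cexp_smul (hg : HasQuadraticDecay g D) :
    HasQuadraticDecay (fun y => Complex.exp (vline y) • g y) (Real.exp 1 * D) where
  continuous := (Complex.continuous_exp.comp continuous_vline).smul hg.continuous
  norm_le y := by
    rw [norm_smul, norm_cexp_vline, mul_div_assoc]
    gcongr
    exact hg.norm_le y

lemma norm_bromwich_le (hg : HasQuadraticDecay g D) : ‖bromwich g‖ ≤ Real.exp 1 * D / 2 := by
  have hint : ‖∫ y, Complex.exp (vline y) • g y‖ ≤ Real.exp 1 * D * Real.pi := by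
    rw [← integral_univ_inv_one_add_sq, ← integral_const_mul]
    exact norm_integral_le_of_norm_le (integrable_inv_one_add_sq.const_mul _)
      (ae_of_all _ hg.cexp_smul.norm_le_mul_inv)
  rw [bromwich, norm_smul, norm_inv, Complex.norm_real, Real.norm_of_nonneg (by positivity)]
  grw [hint]
  field_simp
  rfl

lemma const_smul (hg : HasQuadraticDecay g D) (c : ℂ) :
    HasQuadraticDecay (fun y => c • g y) (‖c‖ * D) where
  continuous := hg.continuous.const_smul c
  norm_le y := by
    rw [norm_smul, mul_div_assoc]
    gcongr
    exact hg.norm_le y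

lemma bromwich_sub (hg : HasQuadraticDecay g D) (hh : HasQuadraticDecay h D') :
    bromwich (fun y => g y - h y) = bromwich g - bromwich h := by
  simp only [bromwich, smul_sub]
  rw [integral_sub hg.cexp_smul.integrable hh.cexp_smul.integrable, smul_sub]

lemma bromwich_eq_neg_of_hasDerivAt (hg : HasQuadraticDecay g D) (hh : HasQuadraticDecay h D')
    (hderiv : ∀ y, HasDerivAt g (Complex.I • h y) y) : bromwich g = -bromwich h := by
  have hd (y : ℝ) : HasDerivAt (fun y => Complex.exp (vline y) • g y)
      (Complex.I • (Complex.exp (vline y) • g y + Complex.exp (vline y) • h y)) y := by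
    refine ((hasDerivAt_vline y).cexp.smul (hderiv y)).congr_deriv ?_
    module
  have hzero := integral_eq_zero_of_hasDerivAt_of_integrable hd
    ((hg.cexp_smul.integrable.add hh.cexp_smul.integrable).smul Complex.I) hg.cexp_smul.integrable
  rw [integral_smul, integral_add hg.cexp_smul.integrable hh.cexp_smul.integrable,
    smul_eq_zero_iff_right Complex.I_ne_zero] at hzero
  rw [bromwich, bromwich, eq_neg_of_add_eq_zero_left hzero, smul_neg]

end Module

section Algebra

variable {E : Type*} [NormedRing E] [NormedAlgebra ℂ E] {g : ℝ → E} {D : ℝ}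

lemma bromwich_mul (hg : HasQuadraticDecay g D) (B : E) :
    bromwich g * B = bromwich (fun y => g y * B) := by
  rw [bromwich, bromwich, smul_mul_assoc,
    ← integral_mul_const_of_integrable hg.cexp_smul.integrable]
  simp only [smul_mul_assoc]

lemma commute_bromwich (hg : HasQuadraticDecay g D) {B : E} (hB : ∀ y, Commute B (g y)) :
    Commute B (bromwich g) := by
  have hmul : B * bromwich g = bromwich (fun y => B * g y) := by
    rw [bromwich, bromwich, mul_smul_comm,
      ← integral_const_mul_of_integrable hg.cexp_smul.integrable]
    simp only [mul_smul_comm]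
  rw [Commute, SemiconjBy, hmul, hg.bromwich_mul]
  simp only [(hB _).eq]

end Algebra

end HasQuadraticDecay

lemma hasDerivAt_bromwich {F : Type*} [NormedAddCommGroup F] [NormedSpace ℂ F]
    {G G' : ℂ → ℝ → F} {s : Set ℂ} {z : ℂ} {D D' : ℝ} (hs : s ∈ 𝓝 z)
    (hG : ∀ w ∈ s, HasQuadraticDecay (G w) D) (hG' : ∀ w ∈ s, HasQuadraticDecay (G' w) D')
    (hderiv : ∀ w ∈ s, ∀ y, HasDerivAt (fun w => G w y) (G' w y) w) :
    HasDerivAt (fun w => bromwich (G w)) (bromwich (G' z)) z := by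
  have hz := mem_of_mem_nhds hs
  refine (hasDerivAt_integral_of_dominated_loc_of_deriv_le (μ := volume) hs ?_
    (hG z hz).cexp_smul.integrable (hG' z hz).cexp_smul.continuous.aestronglyMeasurable
    (ae_of_all _ fun y w hw => (hG' w hw).cexp_smul.norm_le_mul_inv y)
    (integrable_inv_one_add_sq.const_mul _)
    (ae_of_all _ fun y w hw => (hderiv w hw y).const_smul (Complex.exp (vline y)))).2.const_smul _
  filter_upwards [hs] with w hw
  exact (hG w hw).cexp_smul.continuous.aestronglyMeasurable

lemma hasQuadraticDecay_inv_sq_smul {F : Type*} [NormedAddCommGroup F] [NormedSpace ℂ F] (x : F) :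
    HasQuadraticDecay (fun y => (vline y ^ 2)⁻¹ • x) ‖x‖ where
  continuous := ((continuous_vline.pow 2).inv₀ fun y =>
    pow_ne_zero 2 (vline_ne_zero y)).smul continuous_const
  norm_le y := by rw [norm_smul, norm_inv, norm_pow, inv_mul_eq_div]

/-- The function `x e⁻ˣ` on `(0, ∞)`, whose Laplace transform is `(1 + l)⁻²`. -/
noncomputable def gammaDensity : ℝ → ℂ :=
  indicator (Ioi 0) fun x => Complex.exp (-1 * x) • (x : ℂ)

lemma integrable_gammaDensity : Integrable gammaDensity :=
  (integrable_indicator_iff measurableSet_Ioi).2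
    ((isOfExpType_ofReal one_half_pos).integrableOn_cexp_smul (by norm_num))

open scoped FourierTransform in
lemma fourier_gammaDensity (ξ : ℝ) :
    𝓕 gammaDensity ξ = (vline (2 * Real.pi * ξ) ^ 2)⁻¹ := by
  have hv : 0 < (vline (2 * Real.pi * ξ)).re := one_pos.trans_eq (vline_re _).symm
  rw [← laplace_ofReal hv, laplace, Real.fourier_eq', ← integral_indicator measurableSet_Ioi]
  refine integral_congr_ae (ae_of_all _ fun x => ?_)
  by_cases hx : x ∈ Ioi (0 : ℝ)
  · simp only [gammaDensity, indicator_of_mem hx, smul_smul, ← Complex.exp_add, vline]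
    congr 2
    simp
    ring
  · simp only [gammaDensity, indicator_of_notMem hx, smul_zero]

open scoped FourierTransform in
lemma integral_cexp_vline_mul_inv_sq :
    ∫ y : ℝ, Complex.exp (vline y) * (vline y ^ 2)⁻¹ = 2 * Real.pi := by
  have hone : (0 : ℝ) < 1 := one_pos
  have hcont : ContinuousAt gammaDensity 1 := by
    have : ContinuousAt (fun x : ℝ => Complex.exp (-1 * x) • (x : ℂ)) 1 := by fun_prop
    refine this.congr ?_
    filter_upwards [Ioi_mem_nhds hone] with x hx
    rw [gammaDensity, indicator_of_mem hx]
  have htwo_pi : 0 < 2 * Real.pi := by positivity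
  have hint : Integrable (𝓕 gammaDensity) := by
    have := (hasQuadraticDecay_inv_sq_smul (1 : ℂ)).integrable.comp_mul_left' htwo_pi.ne'
    simpa only [smul_eq_mul, mul_one, ← fourier_gammaDensity] using this
  have hinv := integrable_gammaDensity.fourierInv_fourier_eq hint hcont
  have hval : gammaDensity 1 = Complex.exp (-1) := by simp [gammaDensity]
  have hexp (ξ : ℝ) : Complex.exp (↑(2 * Real.pi * inner ℝ ξ 1) * Complex.I) • 𝓕 gammaDensity ξ =
      Complex.exp (-1) *
        (Complex.exp (vline (2 * Real.pi * ξ)) * (vline (2 * Real.pi * ξ) ^ 2)⁻¹) := by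
    rw [fourier_gammaDensity, smul_eq_mul, ← mul_assoc, ← Complex.exp_add]
    simp [vline]
  simp_rw [Real.fourierInv_eq', hexp, hval, integral_const_mul] at hinv
  rw [Measure.integral_comp_mul_left (fun y => Complex.exp (vline y) * (vline y ^ 2)⁻¹),
    mul_eq_left₀ (Complex.exp_ne_zero _), abs_of_pos (inv_pos.2 htwo_pi),
    inv_smul_eq_iff₀ htwo_pi.ne'] at hinv
  simpa using hinv

lemma bromwich_inv_sq_smul {F : Type*} [NormedAddCommGroup F] [NormedSpace ℂ F] [CompleteSpace F]
    (x : F) : bromwich (fun y => (vline y ^ 2)⁻¹ • x) = x := by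
  simp only [bromwich, smul_smul, integral_smul_const, integral_cexp_vline_mul_inv_sq]
  rw [Complex.ofReal_mul, Complex.ofReal_ofNat, inv_mul_cancel₀, one_smul]
  simp [Real.pi_ne_zero]

/-! ### Pseudo-resolvents -/

/-- `R` satisfies the resolvent identity on `U`. -/
def IsPseudoResolvent {E : Type*} [NormedRing E] [NormedAlgebra ℂ E] (R : ℂ → E) (U : Set ℂ) :
    Prop :=
  ∀ ν ∈ U, ∀ μ ∈ U, R ν - R μ = (μ - ν) • (R ν * R μ)

namespace IsPseudoResolvent

variable {E : Type*} [NormedRing E] [NormedAlgebra ℂ E] {R : ℂ → E} {U : Set ℂ} {μ ν : ℂ}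

lemma commute (hR : IsPseudoResolvent R U) (hμ : μ ∈ U) (hν : ν ∈ U) : Commute (R μ) (R ν) := by
  rcases eq_or_ne ν μ with rfl | h
  · exact Commute.refl _
  · refine smul_right_injective E (sub_ne_zero.2 h) ?_
    change (ν - μ) • (R μ * R ν) = (ν - μ) • (R ν * R μ)
    rw [← hR μ hμ ν hν, ← neg_sub μ ν, neg_smul, ← hR ν hν μ hμ, neg_sub]

variable [CompleteSpace E]

lemma continuousAt (hR : IsPseudoResolvent R U) (hU : U ∈ 𝓝 ν) : ContinuousAt R ν := by
  set N : ℂ → E := fun μ => 1 + (μ - ν) • R ν with hN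
  have hN_cont : Continuous N := by fun_prop
  have hN_one : N ν = 1 := by simp [hN]
  have hinv : ContinuousAt (fun μ => R ν * Ring.inverse (N μ)) ν := by
    refine continuousAt_const.mul (ContinuousAt.comp (g := Ring.inverse) ?_ hN_cont.continuousAt)
    rw [hN_one]
    exact NormedRing.inverse_continuousAt 1
  have hunit : ∀ᶠ μ in 𝓝 ν, IsUnit (N μ) :=
    hN_cont.continuousAt.eventually (Units.isOpen.mem_nhds (by simp [hN_one]))
  refine hinv.congr ?_
  filter_upwards [hunit, hU] with μ hμ hμU
  have hmul : R μ * N μ = R ν := by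
    rw [hN, mul_add, mul_one, mul_smul_comm, ← neg_sub ν μ, neg_smul,
      ← hR μ hμU ν (mem_of_mem_nhds hU)]
    abel
  rw [← hmul, Ring.mul_inverse_cancel_right _ _ hμ]

lemma hasDerivAt (hR : IsPseudoResolvent R U) (hU : U ∈ 𝓝 ν) :
    HasDerivAt R (-(R ν * R ν)) ν := by
  rw [hasDerivAt_iff_tendsto_slope]
  have hlim : Tendsto (fun μ => -(R μ * R ν)) (𝓝[≠] ν) (𝓝 (-(R ν * R ν))) :=
    (((hR.continuousAt hU).tendsto.mul_const _).neg).mono_left nhdsWithin_le_nhds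
  refine hlim.congr' ?_
  filter_upwards [self_mem_nhdsWithin, nhdsWithin_le_nhds hU] with μ hμ hμU
  rw [slope_def_module, hR μ hμU ν (mem_of_mem_nhds hU), smul_smul, ← neg_sub μ ν, mul_neg,
    inv_mul_cancel₀ (sub_ne_zero.2 hμ), neg_one_smul]

end IsPseudoResolvent

/-- The half plane `Re μ > 0` enlarged by the balls of radius `δ ‖μ‖` on which the Neumann series
extends a resolvent bounded by a multiple of `1 / ‖μ‖`. -/
def inflatedHalfPlane (δ : ℝ) : Set ℂ := ⋃ μ ∈ {μ : ℂ | 0 < μ.re}, Metric.ball μ (δ * ‖μ‖)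

namespace inflatedHalfPlane

variable {δ : ℝ}

lemma isOpen (δ : ℝ) : IsOpen (inflatedHalfPlane δ) :=
  isOpen_biUnion fun _ _ => Metric.isOpen_ball

lemma mem_of_re_pos (hδ : 0 < δ) {ν : ℂ} (hν : 0 < ν.re) : ν ∈ inflatedHalfPlane δ :=
  mem_biUnion hν (Metric.mem_ball_self (mul_pos hδ (hν.trans_le (Complex.re_le_norm ν))))

lemma vline_div_mem (hδ : 0 < δ) {z : ℂ} (hz : z ∈ cone δ) (y : ℝ) :
    vline y / z ∈ inflatedHalfPlane δ := by
  have hre : 0 < z.re := cone.re_pos hδ hz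
  have hre0 : (z.re : ℂ) ≠ 0 := by exact_mod_cast hre.ne'
  have hz0 : z ≠ 0 := cone.ne_zero hz
  set μ := vline y / (z.re : ℂ) with hμ
  have hμ_re : 0 < μ.re := by
    rw [hμ, Complex.div_ofReal_re, vline_re]
    positivity
  refine mem_biUnion (x := μ) hμ_re ?_
  have hsub : vline y / z - μ = μ * ((z.re - z) / z) := by
    rw [hμ]
    field_simp
  have him : ‖(z.re : ℂ) - z‖ = |z.im| := by
    rw [show (z.re : ℂ) - z = -(z.im * Complex.I) by apply Complex.ext <;> simp]
    simp
  rw [Metric.mem_ball, dist_eq_norm, hsub, norm_mul, norm_div (_ - z) z, him, mul_comm δ]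
  refine mul_lt_mul_of_pos_left ?_ (hμ_re.trans_le (Complex.re_le_norm μ))
  rw [div_lt_iff₀ (norm_pos_iff.2 hz0)]
  calc |z.im| < δ * z.re := hz
    _ ≤ δ * ‖z‖ := by grw [Complex.re_le_norm z]

end inflatedHalfPlane

/-- `R` satisfies the resolvent identity and the scale-invariant bound `‖ν R(ν)‖ ≤ K` on a
region slightly larger than the half plane `Re ν > 0`. -/
structure IsSectorialResolvent {E : Type*} [NormedRing E] [NormedAlgebra ℂ E] (R : ℂ → E)
    (δ K : ℝ) : Prop where
  pos : 0 < δ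
  isPseudoResolvent : IsPseudoResolvent R (inflatedHalfPlane δ)
  norm_le : ∀ ν ∈ inflatedHalfPlane δ, ‖ν‖ * ‖R ν‖ ≤ K

/-- The function `y ↦ (v - zA)⁻¹` along the line `v = 1 + iy`, when `R` is the resolvent of `A`. -/
noncomputable def lineResolvent {E : Type*} [NormedRing E] [NormedAlgebra ℂ E] (R : ℂ → E) (z : ℂ)
    (y : ℝ) : E :=
  z⁻¹ • R (vline y / z)

namespace IsSectorialResolvent

variable {E : Type*} [NormedRing E] [NormedAlgebra ℂ E] {R : ℂ → E} {δ K : ℝ} {z μ : ℂ}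

lemma norm_lineResolvent_le (hR : IsSectorialResolvent R δ K) (hz : z ∈ cone δ) (y : ℝ) :
    ‖lineResolvent R z y‖ ≤ K / ‖vline y‖ := by
  have hz0 : 0 < ‖z‖ := norm_pos_iff.2 (cone.ne_zero hz)
  have hv : 0 < ‖vline y‖ := one_pos.trans_le (one_le_norm_vline y)
  have hle := hR.norm_le _ (inflatedHalfPlane.vline_div_mem hR.pos hz y)
  rw [norm_div, div_mul_eq_mul_div, div_le_iff₀ hz0] at hle
  rw [lineResolvent, norm_smul, norm_inv, inv_mul_eq_div, div_le_div_iff₀ hz0 hv, mul_comm]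
  exact hle

lemma bound_nonneg (hR : IsSectorialResolvent R δ K) : 0 ≤ K :=
  (by positivity : 0 ≤ ‖(1 : ℂ)‖ * ‖R 1‖).trans
    (hR.norm_le 1 (inflatedHalfPlane.mem_of_re_pos hR.pos (by simp)))

lemma norm_lineResolvent_pow_le (hR : IsSectorialResolvent R δ K) (hz : z ∈ cone δ) {n : ℕ}
    (hn : 0 < n) (y : ℝ) : ‖lineResolvent R z y ^ n‖ ≤ K ^ n / ‖vline y‖ ^ n := by
  rw [← div_pow]
  exact (norm_pow_le' _ hn).trans (by gcongr; exact hR.norm_lineResolvent_le hz y)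

lemma commute_lineResolvent (hR : IsSectorialResolvent R δ K) (hμ : μ ∈ inflatedHalfPlane δ)
    (hz : z ∈ cone δ) (y : ℝ) : Commute (R μ) (lineResolvent R z y) :=
  (hR.isPseudoResolvent.commute hμ (inflatedHalfPlane.vline_div_mem hR.pos hz y)).smul_right _

lemma vline_smul_lineResolvent_mul (hR : IsSectorialResolvent R δ K)
    (hμ : μ ∈ inflatedHalfPlane δ) (hz : z ∈ cone δ) (y : ℝ) :
    vline y • (lineResolvent R z y * R μ) =
      R μ + z • (lineResolvent R z y * (μ • R μ - 1)) := by
  have hz0 : z ≠ 0 := cone.ne_zero hz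
  set q := lineResolvent R z y with hq
  have hRq : R (vline y / z) = z • q := by
    rw [hq, lineResolvent, smul_inv_smul₀ hz0]
  have hid := hR.isPseudoResolvent _ (inflatedHalfPlane.vline_div_mem hR.pos hz y) μ hμ
  rw [hRq, smul_mul_assoc, smul_smul, sub_mul, div_mul_cancel₀ _ hz0, sub_smul, mul_smul] at hid
  rw [mul_sub, mul_smul_comm, mul_one, smul_sub, smul_comm z μ]
  linear_combination (norm := module) hid

lemma sq_lineResolvent_mul_sub (hR : IsSectorialResolvent R δ K) (hμ : μ ∈ inflatedHalfPlane δ)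
    (hz : z ∈ cone δ) (y : ℝ) :
    lineResolvent R z y ^ 2 * R μ - (vline y ^ 2)⁻¹ • R μ =
      z • ((vline y ^ 2)⁻¹ • (lineResolvent R z y * (μ • R μ - 1)) +
        (vline y)⁻¹ • (lineResolvent R z y ^ 2 * (μ • R μ - 1))) := by
  have hv := vline_ne_zero y
  have hstep : lineResolvent R z y * R μ =
      (vline y)⁻¹ • (R μ + z • (lineResolvent R z y * (μ • R μ - 1))) := by
    rw [← hR.vline_smul_lineResolvent_mul hμ hz y, inv_smul_smul₀ hv]
  rw [pow_two (lineResolvent R z y), mul_assoc, hstep, mul_smul_comm, mul_add, hstep,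
    mul_smul_comm, ← mul_assoc, ← inv_pow]
  module

variable [CompleteSpace E]

lemma hasDerivAt (hR : IsSectorialResolvent R δ K) {ν : ℂ} (hν : ν ∈ inflatedHalfPlane δ) :
    HasDerivAt R (-(R ν * R ν)) ν :=
  hR.isPseudoResolvent.hasDerivAt ((inflatedHalfPlane.isOpen δ).mem_nhds hν)

lemma hasDerivAt_lineResolvent (hR : IsSectorialResolvent R δ K) (hz : z ∈ cone δ) (y : ℝ) :
    HasDerivAt (lineResolvent R z) (-(Complex.I • lineResolvent R z y ^ 2)) y := by
  have hline : HasDerivAt (fun y : ℝ => vline y / z) (Complex.I / z) y :=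
    (hasDerivAt_vline y).div_const z
  have hcomp := HasDerivAt.scomp y
    (hR.hasDerivAt (inflatedHalfPlane.vline_div_mem hR.pos hz y)) hline
  refine (hcomp.const_smul z⁻¹).congr_deriv ?_
  simp only [lineResolvent, pow_two, smul_mul_smul_comm, smul_smul, smul_neg]
  ring_nf

lemma hasDerivAt_lineResolvent_left (hR : IsSectorialResolvent R δ K) (hz : z ∈ cone δ) (y : ℝ) :
    HasDerivAt (fun w => lineResolvent R w y)
      (z⁻¹ • (vline y • lineResolvent R z y ^ 2 - lineResolvent R z y)) z := by
  have hz0 : z ≠ 0 := cone.ne_zero hz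
  have hdiv : HasDerivAt (fun w : ℂ => vline y / w) (-vline y / z ^ 2) z := by
    simpa [div_eq_mul_inv] using (hasDerivAt_inv hz0).const_mul (vline y)
  have hcomp := HasDerivAt.scomp z
    (hR.hasDerivAt (inflatedHalfPlane.vline_div_mem hR.pos hz y)) hdiv
  refine ((hasDerivAt_inv hz0).smul hcomp).congr_deriv ?_
  simp only [lineResolvent, pow_two, smul_mul_smul_comm, smul_smul, smul_neg, smul_sub,
    Function.comp_apply]
  module

lemma hasQuadraticDecay_pow (hR : IsSectorialResolvent R δ K) (hz : z ∈ cone δ) {n : ℕ}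
    (hn : 2 ≤ n) : HasQuadraticDecay (fun y => lineResolvent R z y ^ n) (K ^ n) where
  continuous := Continuous.pow
    (continuous_iff_continuousAt.2 fun y => (hR.hasDerivAt_lineResolvent hz y).continuousAt) n
  norm_le y := by
    have hK := hR.bound_nonneg
    have hv := one_le_norm_vline y
    exact (hR.norm_lineResolvent_pow_le hz (by lia) y).trans (by gcongr)

lemma hasQuadraticDecay_vline_smul_pow_three (hR : IsSectorialResolvent R δ K)
    (hz : z ∈ cone δ) :
    HasQuadraticDecay (fun y => vline y • lineResolvent R z y ^ 3) (K ^ 3) where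
  continuous := continuous_vline.smul (hR.hasQuadraticDecay_pow hz (by norm_num)).continuous
  norm_le y := by
    have hv : 0 < ‖vline y‖ := one_pos.trans_le (one_le_norm_vline y)
    rw [norm_smul]
    grw [hR.norm_lineResolvent_pow_le hz (by norm_num) y]
    field_simp
    rfl

end IsSectorialResolvent

/-! ### The semigroup of a sectorial resolvent -/

lemma mul_eq_add_mul_of_hasDerivAt {E : Type*} [NormedRing E] [NormedAlgebra ℝ E] {f f' : ℝ → E}
    {L : E} (hderiv : ∀ t, 0 < t → HasDerivAt f (f' t) t)
    (hcomm : ∀ s t, 0 < s → 0 < t → f' s * f t = f s * f' t) (hL : Tendsto f (𝓝[>] 0) (𝓝 L))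
    {s t : ℝ} (hs : 0 < s) (ht : 0 < t) : f s * f t = f (s + t) * L := by
  have hst : 0 < s + t := add_pos hs ht
  have hd (u : ℝ) (hu : u ∈ Ioo 0 (s + t)) :
      HasDerivAt (fun u => f (s + t - u) * f u) 0 u := by
    have hleft := HasDerivAt.comp_const_sub (s + t) u (hderiv (s + t - u) (sub_pos.2 hu.2))
    refine (hleft.mul (hderiv u hu.1)).congr_deriv ?_
    rw [neg_mul, hcomm _ _ (sub_pos.2 hu.2) hu.1, neg_add_cancel]
  have hconst (u : ℝ) (hu : u ∈ Ioo 0 (s + t)) : f (s + t - u) * f u = f s * f t := by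
    have := isOpen_Ioo.is_const_of_deriv_eq_zero isPreconnected_Ioo
      (fun u hu => (hd u hu).differentiableAt.differentiableWithinAt) (fun u hu => (hd u hu).deriv)
      hu ⟨ht, lt_add_of_pos_left t hs⟩
    simpa using this
  have hshift : Tendsto (fun u => f (s + t - u)) (𝓝[>] 0) (𝓝 (f (s + t))) := by
    have hcont : ContinuousAt (fun u => f (s + t - u)) 0 :=
      ContinuousAt.comp (g := f) (by simpa using (hderiv _ hst).continuousAt) (by fun_prop)
    simpa using hcont.tendsto.mono_left nhdsWithin_le_nhds
  refine tendsto_nhds_unique (tendsto_const_nhds.congr' ?_) (hshift.mul hL)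
  filter_upwards [Ioo_mem_nhdsGT hst] with u hu
  exact (hconst u hu).symm

/-- The contour integral `(2πi)⁻¹ ∫ eᵛ (v - zA)⁻² dv`, which is `e^{zA}` when `R` is the resolvent
of `A`. The square, gained by an integration by parts in the usual inversion formula, makes it
converge absolutely. -/
noncomputable def bromwichSemigroup {E : Type*} [NormedRing E] [NormedAlgebra ℂ E] (R : ℂ → E)
    (z : ℂ) : E :=
  bromwich fun y => lineResolvent R z y ^ 2

namespace IsSectorialResolvent

variable {E : Type*} [NormedRing E] [NormedAlgebra ℂ E] [CompleteSpace E] {R : ℂ → E} {δ K : ℝ}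
  {z μ : ℂ}

lemma norm_bromwichSemigroup_le (hR : IsSectorialResolvent R δ K) (hz : z ∈ cone δ) :
    ‖bromwichSemigroup R z‖ ≤ Real.exp 1 * K ^ 2 / 2 :=
  (hR.hasQuadraticDecay_pow hz le_rfl).norm_bromwich_le

lemma commute_bromwichSemigroup (hR : IsSectorialResolvent R δ K) (hμ : μ ∈ inflatedHalfPlane δ)
    (hz : z ∈ cone δ) : Commute (R μ) (bromwichSemigroup R z) :=
  (hR.hasQuadraticDecay_pow hz le_rfl).commute_bromwich fun y =>
    (hR.commute_lineResolvent hμ hz y).pow_right 2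

lemma bromwichSemigroup_eq_two_smul (hR : IsSectorialResolvent R δ K) (hz : z ∈ cone δ) :
    bromwichSemigroup R z = (2 : ℂ) • bromwich fun y => lineResolvent R z y ^ 3 := by
  have hsq := hR.hasQuadraticDecay_pow hz le_rfl
  have hcube := hR.hasQuadraticDecay_pow hz (n := 3) (by norm_num)
  rw [bromwichSemigroup, hsq.bromwich_eq_neg_of_hasDerivAt (hcube.const_smul (-2)) fun y => ?_,
    bromwich_const_smul, neg_smul, neg_neg]
  have hq := hR.hasDerivAt_lineResolvent hz y
  simp only [pow_two]
  refine (hq.mul hq).congr_deriv ?_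
  rw [neg_mul, mul_neg, smul_mul_assoc, mul_smul_comm, ← pow_succ, ← pow_succ']
  module

lemma hasDerivAt_bromwichSemigroup (hR : IsSectorialResolvent R δ K) (hz : z ∈ cone δ) :
    HasDerivAt (bromwichSemigroup R)
      ((2 * z⁻¹) • bromwich fun y =>
        vline y • lineResolvent R z y ^ 3 - lineResolvent R z y ^ 2) z := by
  have hz0 : 0 < ‖z‖ := norm_pos_iff.2 (cone.ne_zero hz)
  have hK := hR.bound_nonneg
  rw [← bromwich_const_smul]
  refine hasDerivAt_bromwich (s := cone δ ∩ {w | ‖z‖ / 2 < ‖w‖}) (D := K ^ 2)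
    (D' := 2 * (‖z‖ / 2)⁻¹ * (K ^ 3 + K ^ 2))
    (G := fun w y => lineResolvent R w y ^ 2)
    (G' := fun w y => (2 * w⁻¹) • (vline y • lineResolvent R w y ^ 3 - lineResolvent R w y ^ 2))
    ?_ ?_ ?_ ?_
  · refine inter_mem ((cone.isOpen δ).mem_nhds hz) ?_
    exact (isOpen_lt continuous_const continuous_norm).mem_nhds (half_lt_self hz0)
  · exact fun w hw => hR.hasQuadraticDecay_pow hw.1 le_rfl
  · rintro w ⟨hw, hzw : ‖z‖ / 2 < ‖w‖⟩
    refine (((hR.hasQuadraticDecay_vline_smul_pow_three hw).sub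
      (hR.hasQuadraticDecay_pow hw le_rfl)).const_smul (2 * w⁻¹)).mono ?_
    rw [norm_mul, Complex.norm_ofNat, norm_inv]
    gcongr
  · intro w hw y
    have hq := hR.hasDerivAt_lineResolvent_left hw.1 y
    simp only [pow_two]
    refine (hq.mul hq).congr_deriv ?_
    simp only [pow_succ, pow_zero, one_mul, smul_mul_assoc, mul_smul_comm, sub_mul, mul_sub,
      mul_assoc]
    module

lemma hasDerivAt_bromwichSemigroup_mul (hR : IsSectorialResolvent R δ K)
    (hμ : μ ∈ inflatedHalfPlane δ) (hz : z ∈ cone δ) :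
    HasDerivAt (fun z => bromwichSemigroup R z * R μ)
      (bromwichSemigroup R z * (μ • R μ - 1)) z := by
  refine ((hR.hasDerivAt_bromwichSemigroup hz).mul_const (R μ)).congr_deriv ?_
  have hcube := hR.hasQuadraticDecay_pow hz (n := 3) (by norm_num)
  have hdecay := (hR.hasQuadraticDecay_vline_smul_pow_three hz).sub
    (hR.hasQuadraticDecay_pow hz le_rfl)
  have hint (y : ℝ) : (vline y • lineResolvent R z y ^ 3 - lineResolvent R z y ^ 2) * R μ =
      z • (lineResolvent R z y ^ 3 * (μ • R μ - 1)) := by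
    rw [sub_mul, smul_mul_assoc, pow_succ _ 2, mul_assoc, ← mul_smul_comm,
      hR.vline_smul_lineResolvent_mul hμ hz, mul_add, add_sub_cancel_left, mul_smul_comm, mul_assoc]
  rw [smul_mul_assoc, hdecay.bromwich_mul]
  simp only [hint]
  rw [bromwich_const_smul, ← hcube.bromwich_mul, smul_smul,
    inv_mul_cancel_right₀ (cone.ne_zero hz), ← smul_mul_assoc,
    ← hR.bromwichSemigroup_eq_two_smul hz]

lemma hasQuadraticDecay_sq_lineResolvent_mul_sub (hR : IsSectorialResolvent R δ K)
    (hμ : μ ∈ inflatedHalfPlane δ) (hz : z ∈ cone δ) :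
    HasQuadraticDecay (fun y => lineResolvent R z y ^ 2 * R μ - (vline y ^ 2)⁻¹ • R μ)
      (‖z‖ * ((K + K ^ 2) * ‖μ • R μ - 1‖)) where
  continuous := ((hR.hasQuadraticDecay_pow hz le_rfl).continuous.mul continuous_const).sub
    (hasQuadraticDecay_inv_sq_smul (R μ)).continuous
  norm_le y := by
    have hv := one_le_norm_vline y
    have hK := hR.bound_nonneg
    have hq : ‖lineResolvent R z y‖ ≤ K :=
      (hR.norm_lineResolvent_le hz y).trans (div_le_self hK hv)
    have hsq := hR.norm_lineResolvent_pow_le hz two_pos y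
    rw [hR.sq_lineResolvent_mul_sub hμ hz, norm_smul, mul_div_assoc]
    gcongr
    set B := μ • R μ - 1
    calc ‖(vline y ^ 2)⁻¹ • (lineResolvent R z y * B) +
          (vline y)⁻¹ • (lineResolvent R z y ^ 2 * B)‖
        ≤ (‖vline y‖ ^ 2)⁻¹ * (‖lineResolvent R z y‖ * ‖B‖) +
          ‖vline y‖⁻¹ * (‖lineResolvent R z y ^ 2‖ * ‖B‖) := by
          refine (norm_add_le _ _).trans ?_
          rw [norm_smul, norm_smul, norm_inv, norm_inv, norm_pow]
          gcongr <;> exact norm_mul_le _ _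
      _ ≤ (‖vline y‖ ^ 2)⁻¹ * (K * ‖B‖) + 1 * (K ^ 2 / ‖vline y‖ ^ 2 * ‖B‖) := by
          gcongr
          exact inv_le_one_of_one_le₀ hv
      _ = (K + K ^ 2) * ‖B‖ / ‖vline y‖ ^ 2 := by ring

lemma norm_bromwichSemigroup_mul_sub_le (hR : IsSectorialResolvent R δ K)
    (hμ : μ ∈ inflatedHalfPlane δ) (hz : z ∈ cone δ) :
    ‖bromwichSemigroup R z * R μ - R μ‖ ≤
      Real.exp 1 * (‖z‖ * ((K + K ^ 2) * ‖μ • R μ - 1‖)) / 2 := by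
  have hsq := hR.hasQuadraticDecay_pow hz le_rfl
  have hsqR : HasQuadraticDecay (fun y => lineResolvent R z y ^ 2 * R μ) (K ^ 2 * ‖R μ‖) := ⟨
    hsq.continuous.mul continuous_const, fun y => by
      grw [norm_mul_le, hsq.norm_le y, div_mul_eq_mul_div]⟩
  have heq : bromwichSemigroup R z * R μ - R μ =
      bromwich fun y => lineResolvent R z y ^ 2 * R μ - (vline y ^ 2)⁻¹ • R μ := by
    rw [hsqR.bromwich_sub (hasQuadraticDecay_inv_sq_smul _), bromwich_inv_sq_smul,
      ← hsq.bromwich_mul, bromwichSemigroup]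
  rw [heq]
  exact (hR.hasQuadraticDecay_sq_lineResolvent_mul_sub hμ hz).norm_bromwich_le

lemma tendsto_bromwichSemigroup_mul (hR : IsSectorialResolvent R δ K)
    (hμ : μ ∈ inflatedHalfPlane δ) :
    Tendsto (fun z => bromwichSemigroup R z * R μ) (𝓝[cone δ] 0) (𝓝 (R μ)) := by
  rw [tendsto_iff_norm_sub_tendsto_zero]
  have hcont : Continuous fun z : ℂ =>
    Real.exp 1 * (‖z‖ * ((K + K ^ 2) * ‖μ • R μ - 1‖)) / 2 := by fun_prop
  refine squeeze_zero' (Eventually.of_forall fun _ => norm_nonneg _) ?_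
    ((hcont.tendsto' 0 0 (by simp)).mono_left nhdsWithin_le_nhds)
  filter_upwards [self_mem_nhdsWithin] with z hz
  exact hR.norm_bromwichSemigroup_mul_sub_le hμ hz

lemma isOfExpType_bromwichSemigroup (hR : IsSectorialResolvent R δ K) :
    IsOfExpType (fun t : ℝ => bromwichSemigroup R t) (Real.exp 1 * K ^ 2 / 2) 0 where
  continuousOn t ht :=
    ((hR.hasDerivAt_bromwichSemigroup (cone.ofReal_mem hR.pos ht)).continuousAt.comp
      Complex.continuous_ofReal.continuousAt).continuousWithinAt
  norm_le t ht := by simpa using hR.norm_bromwichSemigroup_le (cone.ofReal_mem hR.pos ht)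

lemma hasDerivAt_bromwichSemigroup_ofReal_mul (hR : IsSectorialResolvent R δ K)
    (hμ : μ ∈ inflatedHalfPlane δ) {t : ℝ} (ht : 0 < t) :
    HasDerivAt (fun t : ℝ => bromwichSemigroup R t * R μ)
      (bromwichSemigroup R t * (μ • R μ - 1)) t := by
  simpa using hasDerivAt_comp_ofReal_mul (d := 1)
    (by simpa using hR.hasDerivAt_bromwichSemigroup_mul hμ (cone.ofReal_mem hR.pos ht))

lemma tendsto_bromwichSemigroup_ofReal_mul (hR : IsSectorialResolvent R δ K)
    (hμ : μ ∈ inflatedHalfPlane δ) :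
    Tendsto (fun t : ℝ => bromwichSemigroup R t * R μ) (𝓝[>] 0) (𝓝 (R μ)) := by
  refine (hR.tendsto_bromwichSemigroup_mul hμ).comp (tendsto_nhdsWithin_iff.2 ⟨?_, ?_⟩)
  · exact (Complex.continuous_ofReal.tendsto' 0 0 (by simp)).mono_left nhdsWithin_le_nhds
  · filter_upwards [self_mem_nhdsWithin] with t ht
    exact cone.ofReal_mem hR.pos ht

lemma laplace_bromwichSemigroup (hR : IsSectorialResolvent R δ K) (hμ : 0 < μ.re) :
    laplace (fun t : ℝ => bromwichSemigroup R t) μ = R μ := by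
  have hmem := inflatedHalfPlane.mem_of_re_pos hR.pos hμ
  simpa using hR.isOfExpType_bromwichSemigroup.laplace_mul_smul_sub hμ
    (fun _ ht => hR.hasDerivAt_bromwichSemigroup_ofReal_mul hmem ht)
    (hR.tendsto_bromwichSemigroup_ofReal_mul hmem)

lemma bromwichSemigroup_add (hR : IsSectorialResolvent R δ K) (hμ : μ ∈ inflatedHalfPlane δ)
    (hreg : IsLeftRegular (R μ)) {s t : ℝ} (hs : 0 < s) (ht : 0 < t) :
    bromwichSemigroup R (s + t : ℝ) = bromwichSemigroup R s * bromwichSemigroup R t := by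
  have hcomm {t : ℝ} (ht : 0 < t) : Commute (R μ) (bromwichSemigroup R t) :=
    hR.commute_bromwichSemigroup hμ (cone.ofReal_mem hR.pos ht)
  have hcomm' {t : ℝ} (ht : 0 < t) : Commute (μ • R μ - 1) (bromwichSemigroup R t) :=
    ((hcomm ht).smul_left μ).sub_left (Commute.one_left _)
  have hRR : Commute (R μ) (μ • R μ - 1) :=
    ((Commute.refl _).smul_right μ).sub_right (Commute.one_right _)
  have hmul := mul_eq_add_mul_of_hasDerivAt
    (fun _ ht => hR.hasDerivAt_bromwichSemigroup_ofReal_mul hμ ht)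
    (fun s t _ ht => by
      rw [(hcomm' ht).mul_mul_mul_comm, (hcomm ht).mul_mul_mul_comm, hRR.eq])
    (hR.tendsto_bromwichSemigroup_ofReal_mul hμ) hs ht
  refine (hreg.mul hreg) ?_
  have hst := hcomm (add_pos hs ht)
  calc R μ * R μ * bromwichSemigroup R (s + t : ℝ)
      = bromwichSemigroup R (s + t : ℝ) * R μ * R μ := by
        rw [(hst.mul_left hst).eq, mul_assoc]
    _ = bromwichSemigroup R s * R μ * (bromwichSemigroup R t * R μ) := hmul.symm
    _ = R μ * R μ * (bromwichSemigroup R s * bromwichSemigroup R t) := by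
        rw [← (hcomm hs).eq, ← (hcomm ht).eq, (hcomm hs).symm.mul_mul_mul_comm]

end IsSectorialResolvent

/-! ### Generation -/

section Generation

variable {V : Type*} [NormedAddCommGroup V] [NormedSpace ℂ V]

lemma generates_of_isResolventOf_laplace {A : V →ₗ.[ℂ] V} {T : ℝ → V →L[ℂ] V} {M ω : ℝ}
    (hT : IsOfExpType T M ω) (hadd : ∀ s t, 0 < s → 0 < t → T (s + t) = T s * T t)
    (hA : ∀ l : ℝ, ω < l → IsResolventOf A l (laplace T l)) : Generates A T := by
  refine ⟨max M 1, ω, ⟨fun x => hT.continuousOn.clm_apply continuousOn_const, hadd,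
    ⟨by positivity, fun t ht => ?_⟩, fun x hx => ?_⟩,
    fun l hl => ⟨_, hA l hl, hT.laplace_ofReal_apply hl⟩⟩
  · exact (hT.norm_le t ht).trans (by gcongr; exact le_max_left _ _)
  · refine (hA (ω + 1) (lt_add_one ω)).eq_zero_of_apply_eq_zero ?_
    rw [hT.laplace_ofReal_apply (lt_add_one ω)]
    refine setIntegral_eq_zero_of_forall_eq_zero fun t ht => ?_
    rw [hx t ht, smul_zero]

variable [CompleteSpace V] {A : V →ₗ.[ℂ] V} {ω C : ℝ}

lemma exists_isResolventOf_of_mem_inflatedHalfPlane (hC : 0 < C)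
    (hA : ∀ μ : ℂ, 0 < μ.re → ∃ R, IsResolventOf A (μ + ω) R ∧ ‖μ • R‖ ≤ C) {ν : ℂ}
    (hν : ν ∈ inflatedHalfPlane (1 / (2 * C))) :
    ∃ Q, IsResolventOf A (ν + ω) Q ∧ ‖ν‖ * ‖Q‖ ≤ 2 * C + 1 := by
  obtain ⟨μ, hμ : 0 < μ.re, hνμ⟩ := mem_iUnion₂.1 hν
  rw [Metric.mem_ball, dist_comm, dist_eq_norm] at hνμ
  obtain ⟨R, hR, hRC⟩ := hA μ hμ
  rw [norm_smul] at hRC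
  have hdist : ‖μ - ν‖ * ‖R‖ ≤ 1 / 2 :=
    calc ‖μ - ν‖ * ‖R‖ ≤ 1 / (2 * C) * ‖μ‖ * ‖R‖ := by gcongr
      _ = 1 / (2 * C) * (‖μ‖ * ‖R‖) := mul_assoc _ _ _
      _ ≤ 1 / (2 * C) * C := by gcongr
      _ = 1 / 2 := by field_simp
  obtain ⟨Q, hQ, hQR⟩ := hR.exists_of_norm_smul_le (l := ν + ω)
    (by rwa [add_sub_add_right_eq_sub, norm_smul])
  refine ⟨Q, hQ, ?_⟩
  calc ‖ν‖ * ‖Q‖ ≤ (‖μ‖ + ‖μ - ν‖) * (2 * ‖R‖) := by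
        gcongr
        exact norm_le_norm_add_norm_sub _ _
    _ = 2 * (‖μ‖ * ‖R‖) + 2 * (‖μ - ν‖ * ‖R‖) := by ring
    _ ≤ 2 * C + 1 := by linarith

lemma exists_isSectorialResolvent
    (hA : ∀ μ : ℂ, 0 < μ.re → ∃ R, IsResolventOf A (μ + ω) R ∧ ‖μ • R‖ ≤ C) :
    ∃ (R : ℂ → V →L[ℂ] V) (δ K : ℝ), IsSectorialResolvent R δ K ∧
      ∀ ν : ℂ, 0 < ν.re → IsResolventOf A (ν + ω) (R ν) := by
  have hD : 0 < max C 1 := by positivity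
  have hex (ν : ℂ) (hν : ν ∈ inflatedHalfPlane (1 / (2 * max C 1))) :=
    exists_isResolventOf_of_mem_inflatedHalfPlane hD (fun μ hμ =>
      (hA μ hμ).imp fun R hR => ⟨hR.1, hR.2.trans (le_max_left C 1)⟩) hν
  choose! R hR hRK using hex
  have hδ : 0 < 1 / (2 * max C 1) := by positivity
  refine ⟨R, _, _, ⟨hδ, fun ν hν μ hμ => ?_, hRK⟩,
    fun ν hν => hR ν (inflatedHalfPlane.mem_of_re_pos hδ hν)⟩
  simpa using (hR μ hμ).sub_eq_smul_mul (hR ν hν)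

lemma IsSectorialResolvent.generates_cexp_smul_bromwichSemigroup {R : ℂ → V →L[ℂ] V} {δ K : ℝ}
    (hR : IsSectorialResolvent R δ K)
    (hA : ∀ ν : ℂ, 0 < ν.re → IsResolventOf A (ν + ω) (R ν)) :
    Generates A fun t : ℝ => Complex.exp (ω * t) • bromwichSemigroup R t := by
  have htype := hR.isOfExpType_bromwichSemigroup
  have hexp : Continuous fun t : ℝ => Complex.exp (ω * t) := by fun_prop
  have hone : (0 : ℝ) < (1 : ℂ).re := by simp
  refine generates_of_isResolventOf_laplace (M := Real.exp 1 * K ^ 2 / 2) (ω := ω)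
    ⟨hexp.continuousOn.smul htype.continuousOn, fun t ht => ?_⟩ (fun s t hs ht => ?_)
    fun l hl => ?_
  · rw [norm_smul, norm_cexp_mul_ofReal, Complex.ofReal_re, mul_comm]
    gcongr
    simpa using htype.norm_le t ht
  · rw [hR.bromwichSemigroup_add (inflatedHalfPlane.mem_of_re_pos hR.pos hone)
      (hA 1 hone).isLeftRegular hs ht, smul_mul_smul_comm, ← Complex.exp_add, ← mul_add,
      Complex.ofReal_add]
  · have hre : 0 < ((l : ℂ) - ω).re := by simpa using hl
    rw [laplace_cexp_smul, hR.laplace_bromwichSemigroup hre]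
    simpa using hA _ hre

lemma exists_generates_of_resolvent_estimate
    (hA : ∀ μ : ℂ, 0 < μ.re → ∃ R, IsResolventOf A (μ + ω) R ∧ ‖μ • R‖ ≤ C) :
    ∃ (θ M : ℝ) (S : ℂ → V →L[ℂ] V), 0 < θ ∧ θ ≤ Real.pi / 2 ∧ DifferentiableOn ℂ S (Sector θ) ∧
      (∀ z ∈ Sector θ, ‖S z‖ ≤ Real.exp (ω * z.re) * M) ∧ Generates A fun t : ℝ => S t := by
  obtain ⟨R, δ, K, hR, hRA⟩ := exists_isSectorialResolvent hA
  refine ⟨Real.arctan δ, Real.exp 1 * K ^ 2 / 2,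
    fun z => Complex.exp (ω * z) • bromwichSemigroup R z, Real.arctan_pos.2 hR.pos,
    (Real.arctan_lt_pi_div_two δ).le, ?_, ?_, hR.generates_cexp_smul_bromwichSemigroup hRA⟩
  all_goals rw [sector_arctan hR.pos]
  · have hexp : Differentiable ℂ fun z : ℂ => Complex.exp (ω * z) := by fun_prop
    exact hexp.differentiableOn.smul fun z hz =>
      (hR.hasDerivAt_bromwichSemigroup hz).differentiableAt.differentiableWithinAt
  · intro z hz
    rw [norm_smul, Complex.norm_exp, Complex.re_ofReal_mul]
    gcongr
    exact hR.norm_bromwichSemigroup_le hz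

namespace HasResolventEstimate

lemma exists_isBoundedHolomorphicSG (hA : HasResolventEstimate A 0 C) :
    ∃ T : ℝ → V →L[ℂ] V, Generates A T ∧ IsBoundedHolomorphicSG T := by
  obtain ⟨θ, M, S, hθ0, hθ, hS, hM, hgen⟩ :=
    exists_generates_of_resolvent_estimate (ω := 0) (by simpa [HasResolventEstimate] using hA)
  exact ⟨_, hgen, θ, hθ0, hθ, S, hS, fun _ _ => rfl, M, by simpa using hM⟩

lemma exists_isHolomorphicSG (hA : HasResolventEstimate A ω C) :
    ∃ T : ℝ → V →L[ℂ] V, Generates A T ∧ IsHolomorphicSG T := by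
  set w := max ω 0
  have hw : 0 ≤ w := le_max_right _ _
  have hle {μ : ℂ} (hμ : 0 < μ.re) : ‖μ‖ ≤ ‖μ + w‖ := by
    rw [Complex.norm_eq_sqrt_sq_add_sq, Complex.norm_eq_sqrt_sq_add_sq, Complex.add_re,
      Complex.add_im, Complex.ofReal_re, Complex.ofReal_im, add_zero]
    gcongr
    exact le_add_of_nonneg_right hw
  obtain ⟨θ, M, S, hθ0, hθ, hS, hM, hgen⟩ :=
    exists_generates_of_resolvent_estimate (A := A) (ω := w) (C := C) fun μ hμ => by
      have hωμ : ω < (μ + w).re := by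
        rw [Complex.add_re, Complex.ofReal_re]
        linarith [le_max_left ω 0]
      obtain ⟨R, hR, hRC⟩ := hA (μ + w) hωμ
      refine ⟨R, hR, le_trans ?_ hRC⟩
      rw [norm_smul, norm_smul]
      grw [hle hμ]
  refine ⟨_, hgen, θ, hθ0, hθ, S, hS, fun _ _ => rfl, Real.exp w * |M|, fun z hz hz1 => ?_⟩
  have hwz : w * z.re ≤ w := mul_le_of_le_one_right hw ((Complex.re_le_norm z).trans hz1)
  grw [hM z hz, le_abs_self M, hwz]

end HasResolventEstimate

end Generation

/-- `A` generates a holomorphic semigroup iff for some `ω ∈ ℝ` the half plane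
`{Re λ > ω}` lies in the resolvent set of `A` and `sup_{Re λ > ω} ‖λ R(λ, A)‖ < ∞`;
and `A` generates a bounded holomorphic semigroup iff this holds with `ω = 0`. -/
theorem generates_holomorphic_iff_resolvent_estimate (A : X →ₗ.[ℂ] X) :
    ((∃ T : ℝ → X →L[ℂ] X, Generates A T ∧ IsHolomorphicSG T) ↔
      (∃ ω : ℝ, ∃ C : ℝ, ∀ l : ℂ, ω < l.re →
        ∃ R : X →L[ℂ] X, IsResolventOf A l R ∧ ‖l • R‖ ≤ C)) ∧
    ((∃ T : ℝ → X →L[ℂ] X, Generates A T ∧ IsBoundedHolomorphicSG T) ↔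
      (∃ C : ℝ, ∀ l : ℂ, 0 < l.re →
        ∃ R : X →L[ℂ] X, IsResolventOf A l R ∧ ‖l • R‖ ≤ C)) :=
  ⟨⟨fun ⟨_, hA, hT⟩ => hA.exists_hasResolventEstimate hT,
      fun ⟨_, _, hA⟩ => HasResolventEstimate.exists_isHolomorphicSG hA⟩,
    ⟨fun ⟨_, hA, hT⟩ => hA.exists_hasResolventEstimate_zero hT,
      fun ⟨_, hA⟩ => HasResolventEstimate.exists_isBoundedHolomorphicSG hA⟩⟩
end

section
/- Let X be a complex Banach space and let T be a bounded linear operator on X such that T² is compact. If I − T is injective, then I − T is surjective. -/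
/-!
Since `(1 - z) exp z = 1 - z² g(z)` with `g` entire, `(I - T) exp T = I - T² g(T)`. The factor
`exp T` is invertible, so `I - T` may be replaced by `I - T'` with `T' = T² g(T)`. If `T²` is
compact then so is `T'`, and the Fredholm alternative for compact operators applies to it.
If only `T ^ (2m)` is compact, then `T' ^ m` is compact, and one concludes by iterating.
-/

open NormedSpace Nat

section Exponential

variable {𝔸 : Type*} [NormedRing 𝔸] [NormedAlgebra ℚ 𝔸] [CompleteSpace 𝔸]

theorem summable_inv_factorial_add_smul_pow (k : ℕ) (a : 𝔸) :
    Summable fun n ↦ ((n + k)!⁻¹ : ℚ) • a ^ n := by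
  refine (norm_expSeries_summable' (𝕂 := ℚ) a).of_norm_bounded fun n ↦ ?_
  rw [norm_smul, norm_smul]
  gcongr ?_ * _
  simp only [norm_inv, ← Rat.norm_cast_real, Rat.cast_natCast, Real.norm_natCast]
  gcongr
  exact le_add_right n k

theorem exists_exp_eq_one_add_self_add_sq_mul (a : 𝔸) :
    ∃ b, Commute a b ∧ exp a = 1 + a + a ^ 2 * b := by
  refine ⟨∑' n, ((n + 2)!⁻¹ : ℚ) • a ^ n,
    Commute.tsum_right a fun n ↦ ((Commute.refl a).pow_right n).smul_right _, ?_⟩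
  simp only [exp_eq_tsum_rat]
  rw [← (expSeries_summable' (𝕂 := ℚ) a).sum_add_tsum_nat_add 2,
    ← (summable_inv_factorial_add_smul_pow 2 a).tsum_mul_left]
  simp [Finset.sum_range_succ, ← pow_add, add_comm 2]

theorem exists_one_sub_mul_exp_eq_one_sub_sq_mul (a : 𝔸) :
    ∃ b, Commute a b ∧ (1 - a) * exp a = 1 - a ^ 2 * b := by
  obtain ⟨c, hac, hexp⟩ := exists_exp_eq_one_add_self_add_sq_mul a
  refine ⟨1 - (1 - a) * c, ?_, ?_⟩
  · exact (Commute.one_right a).sub_right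
      (((Commute.one_right a).sub_right (Commute.refl a)).mul_right hac)
  · rw [hexp]
    noncomm_ring

end Exponential

section CompactPower

variable {𝕜 X : Type*} [NontriviallyNormedField 𝕜] [NormedAddCommGroup X] [NormedSpace 𝕜 X]
  [CompleteSpace X]

theorem isUnit_one_sub_of_isCompactOperator {T : X →L[𝕜] X} (hT : IsCompactOperator T)
    (hinj : Function.Injective (1 - T : X →L[𝕜] X)) : IsUnit (1 - T) := by
  have not_hasEigenvalue : ¬ Module.End.HasEigenvalue (T : Module.End 𝕜 X) 1 := by
    intro h
    obtain ⟨x, hx⟩ := h.exists_hasEigenvector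
    refine hx.2 (hinj ?_)
    simpa [sub_eq_zero] using hx.apply_eq_smul.symm
  simpa [spectrum.mem_resolventSet_iff] using
    (hT.hasEigenvalue_or_mem_resolventSet one_ne_zero).resolve_left not_hasEigenvalue

theorem isUnit_one_sub_of_isCompactOperator_pow_two_pow [NormedAlgebra ℚ 𝕜] (k : ℕ)
    {T : X →L[𝕜] X} (hT : IsCompactOperator ⇑(T ^ 2 ^ k))
    (hinj : Function.Injective (1 - T : X →L[𝕜] X)) : IsUnit (1 - T) := by
  induction k generalizing T with
  | zero => exact isUnit_one_sub_of_isCompactOperator (by simpa using hT) hinj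
  | succ k ih =>
    let : NormedAlgebra ℚ (X →L[𝕜] X) := .restrictScalars ℚ 𝕜 _
    obtain ⟨G, hTG, hfactor⟩ := exists_one_sub_mul_exp_eq_one_sub_sq_mul T
    have isUnit_exp_T : IsUnit (exp T) := isUnit_exp T
    have compact_pow : IsCompactOperator ⇑((T ^ 2 * G) ^ 2 ^ k) := by
      rw [(hTG.pow_left 2).mul_pow, ← pow_mul, ← pow_succ']
      exact hT.comp_clm (G ^ 2 ^ k)
    have injective_one_sub : Function.Injective (1 - T ^ 2 * G : X →L[𝕜] X) := by
      rw [← hfactor]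
      exact hinj.comp (ContinuousLinearMap.isUnit_iff_bijective.1 isUnit_exp_T).injective
    have isUnit_mul_exp : IsUnit ((1 - T) * exp T) := hfactor ▸ ih compact_pow injective_one_sub
    exact isUnit_exp_T.mul_right_iff.1 isUnit_mul_exp

end CompactPower

theorem fredholm_alternative_of_sq_compact_general
    {𝕜 X : Type*} [NontriviallyNormedField 𝕜] [NormedAlgebra ℚ 𝕜]
    [NormedAddCommGroup X] [NormedSpace 𝕜 X] [CompleteSpace X]
    (T : X →L[𝕜] X) (n : ℕ) (hc : IsCompactOperator ⇑(T ^ n))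
    (hinj : Function.Injective (ContinuousLinearMap.id 𝕜 X - T)) :
    Function.Surjective (ContinuousLinearMap.id 𝕜 X - T) := by
  have compact_two_pow : IsCompactOperator ⇑(T ^ 2 ^ n) := by
    rw [← Nat.add_sub_of_le n.lt_two_pow_self.le, pow_add]
    exact hc.comp_clm (T ^ (2 ^ n - n))
  exact (ContinuousLinearMap.isUnit_iff_bijective.1
    (isUnit_one_sub_of_isCompactOperator_pow_two_pow n compact_two_pow hinj)).surjective

/-- if `T` is a bounded operator on a complex Banach space whose square is
compact and `I - T` is injective, then `I - T` is surjective. -/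
theorem fredholm_alternative_of_sq_compact
    {X : Type*} [NormedAddCommGroup X] [NormedSpace ℂ X] [CompleteSpace X]
    (T : X →L[ℂ] X) (hc : IsCompactOperator (T.comp T))
    (hinj : Function.Injective (ContinuousLinearMap.id ℂ X - T)) :
    Function.Surjective (ContinuousLinearMap.id ℂ X - T) :=
  fredholm_alternative_of_sq_compact_general T 2 (by rwa [pow_two]) hinj
end

section
/- Let X be a complex Banach space and let T be a bounded linear operator on X such that T² is compact. Then every nonzero point of the spectrum σ(T) is an isolated point of σ(T); in particular, σ(T) \ {0} is discrete with 0 as the only possible accumulation point. -/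
/-!
For compact `K` and `r > 0`, only finitely many spectral values of `K` have norm at least `r`: by
the Fredholm alternative these are eigenvalues, and eigenvectors `v 0, v 1, …` for distinct
eigenvalues `μ 0, μ 1, …` span a strictly increasing chain of finite-dimensional subspaces with
`(K - μ n) (V (n + 1)) ≤ V n`. Riesz's lemma then yields a bounded sequence whose image under `K`
is `r`-separated, which is impossible. So the nonzero spectral values of `p(T)`, when it is compact,
are isolated, and this pulls back to the spectral values of `T` off the zeros of `p`, since
`p(σ(T)) ⊆ σ(p(T))` and a nonconstant polynomial has finite fibres.
-/

open Filter Module Polynomial Topology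

section Topology

variable {α β : Type*}

theorem exists_ball_inter_eq_singleton_of_not_accPt [PseudoMetricSpace α] {s : Set α} {x : α}
    (hx : x ∈ s) (h : ¬ AccPt x (𝓟 s)) : ∃ ε > 0, Metric.ball x ε ∩ s = {x} := by
  simp only [accPt_iff_frequently, not_frequently, Metric.eventually_nhds_iff_ball] at h
  obtain ⟨ε, hε, hball⟩ := h
  refine ⟨ε, hε, Set.eq_singleton_iff_unique_mem.2 ⟨⟨Metric.mem_ball_self hε, hx⟩, ?_⟩⟩
  rintro y ⟨hyε, hys⟩
  by_contra hyx
  exact hball y hyε ⟨hyx, hys⟩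

theorem accPt_image_of_finite_fiber [TopologicalSpace α] [T1Space α] [TopologicalSpace β]
    {f : α → β} {s : Set α} {x : α} (hf : ContinuousAt f x) (hfin : (f ⁻¹' {f x}).Finite)
    (hx : AccPt x (𝓟 s)) : AccPt (f x) (𝓟 (f '' s)) := by
  by_contra hfx
  simp only [accPt_iff_frequently, not_frequently] at hfx
  refine Set.Infinite.of_accPt (hx.nhds_inter (hf.eventually hfx)) (hfin.subset ?_)
  rintro y ⟨hy, hys⟩
  by_contra hyx
  exact hy ⟨hyx, Set.mem_image_of_mem f hys⟩

end Topology

theorem map_sub_smul_span_image_Iio_succ_le {R M : Type*} [CommRing R] [AddCommGroup M]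
    [Module R M] {f : End R M} {μ : ℕ → R} {v : ℕ → M} (hv : ∀ n, f (v n) = μ n • v n) (n : ℕ) :
    (Submodule.span R (v '' Set.Iio (n + 1))).map (f - μ n • 1) ≤
      Submodule.span R (v '' Set.Iio n) := by
  rw [Submodule.map_span_le]
  rintro _ ⟨m, hm, rfl⟩
  have hfv : (f - μ n • 1) (v m) = (μ m - μ n) • v m := by simp [hv, sub_smul]
  rw [hfv]
  rcases Nat.lt_succ_iff_lt_or_eq.1 hm with hmn | rfl
  · exact Submodule.smul_mem _ _ (Submodule.subset_span ⟨m, hmn, rfl⟩)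
  · simp

theorem strictMono_span_image_Iio {R M : Type*} [Ring R] [Nontrivial R] [AddCommGroup M]
    [Module R M] {v : ℕ → M} (hv : LinearIndependent R v) :
    StrictMono fun n ↦ Submodule.span R (v '' Set.Iio n) := by
  refine strictMono_nat_of_lt_succ fun n ↦ SetLike.lt_iff_le_and_exists.2
    ⟨Submodule.span_mono (by gcongr; simp), v n, Submodule.subset_span ⟨n, by simp, rfl⟩, ?_⟩
  exact hv.notMem_span_image (by simp)

section CompactOperator

variable {𝕜 E : Type*} [NontriviallyNormedField 𝕜] [NormedAddCommGroup E] [NormedSpace 𝕜 E]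

theorem exists_mem_norm_le_forall_one_le_norm_sub {V W : Submodule 𝕜 E}
    (hV : IsClosed (V : Set E)) (hVW : V < W) {c : 𝕜} (hc : 1 < ‖c‖) {R : ℝ} (hR : ‖c‖ < R) :
    ∃ x ∈ W, ‖x‖ ≤ R ∧ ∀ y ∈ V, 1 ≤ ‖x - y‖ := by
  obtain ⟨hle, w, hw, hwV⟩ := SetLike.lt_iff_le_and_exists.1 hVW
  have hclosed : IsClosed (V.comap W.subtype : Set W) := hV.preimage continuous_subtype_val
  obtain ⟨⟨x, hx⟩, hxR, hxV⟩ := riesz_lemma_of_norm_lt hc hR hclosed ⟨⟨w, hw⟩, hwV⟩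
  exact ⟨x, hx, hxR, fun y hy ↦ hxV ⟨y, hle hy⟩ hy⟩

variable {F : Type*} [NormedAddCommGroup F] [NormedSpace 𝕜 F]

theorem exists_lt_norm_map_sub_map_lt {K : E →ₗ[𝕜] F} (hK : IsCompactOperator K) {f : ℕ → E}
    {R : ℝ} (hf : ∀ n, ‖f n‖ ≤ R) {r : ℝ} (hr : 0 < r) :
    ∃ m n, m < n ∧ ‖K (f n) - K (f m)‖ < r := by
  obtain ⟨S, hS, hKS⟩ := hK.image_closedBall_subset_compact R
  obtain ⟨y, -, ψ, hψ, hlim⟩ := hS.tendsto_subseq fun n ↦ hKS ⟨f n, by simp [hf], rfl⟩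
  obtain ⟨N, hN⟩ := Metric.cauchySeq_iff'.1 hlim.cauchySeq r hr
  exact ⟨ψ N, ψ (N + 1), hψ N.lt_succ_self, by simpa [dist_eq_norm_sub] using hN (N + 1)⟩

theorem not_strictMono_of_map_sub_smul_le {K : End 𝕜 E} (hK : IsCompactOperator K) {r : ℝ}
    (hr : 0 < r) {μ : ℕ → 𝕜} (hμ : ∀ n, r ≤ ‖μ n‖) {V : ℕ → Submodule 𝕜 E}
    (hV : ∀ n, IsClosed (V n : Set E))
    (hKV : ∀ n, (V (n + 1)).map (K - μ n • 1) ≤ V n) : ¬ StrictMono V := by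
  intro hmono
  have hshift (n : ℕ) {x : E} (hx : x ∈ V (n + 1)) : K x - μ n • x ∈ V n :=
    hKV n (Submodule.mem_map_of_mem hx)
  have hinvariant (n : ℕ) {x : E} (hx : x ∈ V (n + 1)) : K x ∈ V (n + 1) := by
    simpa using add_mem (hmono.monotone n.le_succ (hshift n hx)) ((V (n + 1)).smul_mem (μ n) hx)
  obtain ⟨c, hc⟩ := NormedField.exists_one_lt_norm 𝕜
  choose f hfV hfR hfar using fun n ↦
    exists_mem_norm_le_forall_one_le_norm_sub (hV n) (hmono n.lt_succ_self) hc (lt_add_one ‖c‖)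
  obtain ⟨m, n, hmn, hlt⟩ := exists_lt_norm_map_sub_map_lt hK hfR hr
  have hμn : μ n ≠ 0 := norm_pos_iff.1 (hr.trans_le (hμ n))
  let u := (μ n)⁻¹ • (K (f m) - (K (f n) - μ n • f n))
  have hu : u ∈ V n := Submodule.smul_mem _ _
    (sub_mem (hmono.monotone hmn (hinvariant m (hfV m))) (hshift n (hfV n)))
  have hKu : K (f n) - K (f m) = μ n • (f n - u) := by
    rw [smul_sub, smul_inv_smul₀ hμn]
    abel
  refine hlt.not_ge ?_
  calc r ≤ ‖μ n‖ * 1 := by simpa using hμ n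
    _ ≤ ‖μ n‖ * ‖f n - u‖ := by gcongr; exact hfar n u hu
    _ = ‖K (f n) - K (f m)‖ := by rw [hKu, norm_smul]

variable [CompleteSpace 𝕜]

theorem finite_setOf_hasEigenvalue_le_norm {K : End 𝕜 E} (hK : IsCompactOperator K) {r : ℝ}
    (hr : 0 < r) : {μ : 𝕜 | K.HasEigenvalue μ ∧ r ≤ ‖μ‖}.Finite := by
  by_contra hinf
  let μ := Set.Infinite.natEmbedding _ hinf
  choose v hv using fun n ↦ (μ n).2.1.exists_hasEigenvector
  have hli : LinearIndependent 𝕜 v := End.eigenvectors_linearIndependent' K (fun n ↦ (μ n : 𝕜))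
    (Subtype.val_injective.comp μ.injective) v hv
  have hclosed (n : ℕ) : IsClosed (Submodule.span 𝕜 (v '' Set.Iio n) : Set E) :=
    haveI := FiniteDimensional.span_of_finite 𝕜 ((Set.finite_Iio n).image v)
    Submodule.closed_of_finiteDimensional _
  exact not_strictMono_of_map_sub_smul_le hK hr (fun n ↦ (μ n).2.2) hclosed
    (map_sub_smul_span_image_Iio_succ_le fun n ↦ (hv n).apply_eq_smul)
    (strictMono_span_image_Iio hli)

variable [CompleteSpace E]

theorem not_accPt_spectrum_of_isCompactOperator {K : E →L[𝕜] E} (hK : IsCompactOperator K)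
    {l : 𝕜} (hl : l ≠ 0) : ¬ AccPt l (𝓟 (spectrum 𝕜 K)) := by
  intro hacc
  have hl' : 0 < ‖l‖ := norm_pos_iff.2 hl
  have hnhds : {z : 𝕜 | ‖l‖ / 2 < ‖z‖} ∈ 𝓝 l :=
    (isOpen_lt continuous_const continuous_norm).mem_nhds (half_lt_self hl')
  have hfinite := finite_setOf_hasEigenvalue_le_norm (K := (K : End 𝕜 E)) hK (half_pos hl')
  refine Set.Infinite.of_accPt (hacc.nhds_inter hnhds) (hfinite.subset ?_)
  rintro z ⟨hz : ‖l‖ / 2 < ‖z‖, hzK⟩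
  have hz0 : z ≠ 0 := norm_pos_iff.1 ((half_pos hl').trans hz)
  exact ⟨(hK.hasEigenvalue_iff_mem_spectrum hz0).2 hzK, hz.le⟩

theorem not_accPt_spectrum_of_isCompactOperator_aeval_of_natDegree_ne_zero {T : E →L[𝕜] E}
    {p : 𝕜[X]} (hp : IsCompactOperator (aeval T p)) (hdeg : p.natDegree ≠ 0) {l : 𝕜}
    (hl : p.eval l ≠ 0) : ¬ AccPt l (𝓟 (spectrum 𝕜 T)) := by
  intro hacc
  have hfiber : ((p.eval ·) ⁻¹' {p.eval l}).Finite := by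
    rw [preimage_eval_singleton fun hpC ↦ hdeg (natDegree_eq_zero.2 ⟨_, hpC.symm⟩)]
    exact rootSet_finite _ _
  have himage : AccPt (p.eval l) (𝓟 ((p.eval ·) '' spectrum 𝕜 T)) :=
    accPt_image_of_finite_fiber p.continuousAt hfiber hacc
  exact not_accPt_spectrum_of_isCompactOperator hp hl
    (himage.mono (principal_mono.2 (spectrum.subset_polynomial_aeval T p)))

theorem not_accPt_spectrum_of_isCompactOperator_aeval {T : E →L[𝕜] E} {p : 𝕜[X]}
    (hp : IsCompactOperator (aeval T p)) {l : 𝕜} (hl : p.eval l ≠ 0) :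
    ¬ AccPt l (𝓟 (spectrum 𝕜 T)) := by
  -- A linear factor with value `1` at `l` makes the polynomial nonconstant.
  let q : 𝕜[X] := (X - C (l - 1)) * p
  have hp0 : p ≠ 0 := fun h ↦ hl (by simp [h])
  have hdeg : q.natDegree ≠ 0 := by
    rw [natDegree_mul (X_sub_C_ne_zero _) hp0, natDegree_X_sub_C]
    lia
  have hq : IsCompactOperator (aeval T q) := by
    rw [map_mul]
    exact hp.clm_comp _
  exact not_accPt_spectrum_of_isCompactOperator_aeval_of_natDegree_ne_zero hq hdeg
    (by simpa [q] using hl)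

theorem isolated_spectrum_of_sq_compact_general (T : E →L[𝕜] E) (p : 𝕜[X])
    (hp : IsCompactOperator (aeval T p)) :
    (∀ l ∈ spectrum 𝕜 T, p.eval l ≠ 0 →
      ∃ ε : ℝ, 0 < ε ∧ Metric.ball l ε ∩ spectrum 𝕜 T = {l}) ∧
    (∀ l : 𝕜, p.eval l ≠ 0 → ¬ AccPt l (𝓟 (spectrum 𝕜 T))) :=
  ⟨fun _ hlT hl ↦ exists_ball_inter_eq_singleton_of_not_accPt hlT
    (not_accPt_spectrum_of_isCompactOperator_aeval hp hl),
    fun _ hl ↦ not_accPt_spectrum_of_isCompactOperator_aeval hp hl⟩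

end CompactOperator

/-- if `T` is a bounded operator on a complex Banach space whose square is
compact, then every nonzero spectral value of `T` is an isolated point of the spectrum;
in particular no nonzero complex number is an accumulation point of the spectrum. -/
theorem isolated_spectrum_of_sq_compact
    {X : Type*} [NormedAddCommGroup X] [NormedSpace ℂ X] [CompleteSpace X]
    (T : X →L[ℂ] X) (hc : IsCompactOperator (T.comp T)) :
    (∀ l ∈ spectrum ℂ T, l ≠ 0 →
      ∃ ε : ℝ, 0 < ε ∧ Metric.ball l ε ∩ spectrum ℂ T = {l}) ∧
    (∀ l : ℂ, l ≠ 0 → ¬ AccPt l (Filter.principal (spectrum ℂ T))) := by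
  have hT : IsCompactOperator (aeval T (Polynomial.X ^ 2 : ℂ[X])) := by
    rwa [aeval_X_pow, pow_two]
  simpa using isolated_spectrum_of_sq_compact_general T (Polynomial.X ^ 2) hT
end

section
/- Let Ω ⊆ ℝ^d be a bounded open set and let μ assign to each z ∈ ∂Ω a positive finite Borel measure μ(z) on Ω with μ(z)(Ω) ≤ 1. Let u : Ω̄ → ℝ be continuous and satisfy u(z) ≤ ∫_Ω u(x) μ(z,dx) for all z ∈ ∂Ω. If c := max_{x ∈ Ω̄} u(x) > 0, then there exists x₀ ∈ Ω with u(x₀) = c. -/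
open MeasureTheory Set

/-!
If the maximum is attained at a boundary point `z`, then `u z ≤ ∫_Ω u dμ(z)`. This integral is
positive and `μ(z)` has mass at most `1`, so dividing by the mass shows that it is at most the
average of `u` over `Ω`, and by the first moment method some point of `Ω` reaches that average.
-/

section SubProbability

variable {X : Type*} [MeasurableSpace X] {μ : Measure X} {f : X → ℝ} {s : Set X}

theorem integral_le_average_of_measure_univ_le_one (hμ : μ univ ≤ 1) (hf : 0 ≤ ∫ x, f x ∂μ) :
    ∫ x, f x ∂μ ≤ ⨍ x, f x ∂μ := by
  rcases eq_or_ne μ 0 with rfl | hμ₀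
  · simp
  · have : NeZero μ := ⟨hμ₀⟩
    have : IsFiniteMeasure μ := ⟨hμ.trans_lt ENNReal.one_lt_top⟩
    rw [average_eq, smul_eq_mul]
    have hreal : μ.real univ ≤ 1 := ENNReal.toReal_le_of_le_ofReal zero_le_one (by simpa using hμ)
    exact le_mul_of_one_le_left hf (one_le_inv_iff₀.2 ⟨measureReal_univ_pos, hreal⟩)

theorem exists_mem_setIntegral_le_of_measure_le_one (hμ : μ s ≤ 1) (hf : IntegrableOn f s μ)
    (hpos : 0 < ∫ x in s, f x ∂μ) : ∃ x ∈ s, ∫ a in s, f a ∂μ ≤ f x := by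
  have hμ₀ : μ s ≠ 0 := fun h ↦ hpos.ne' (setIntegral_measure_zero f h)
  obtain ⟨x, hxs, hx⟩ := exists_setAverage_le hμ₀ (hμ.trans_lt ENNReal.one_lt_top).ne hf
  have hle := integral_le_average_of_measure_univ_le_one (by simpa using hμ) hpos.le
  exact ⟨x, hxs, hle.trans hx⟩

end SubProbability

theorem interior_maximum_of_nonlocal_boundary_condition_general
    {X : Type*} [MeasurableSpace X] {Ω K : Set X} (μ : X → Measure X)
    (hmass : ∀ z ∈ K \ Ω, μ z Ω ≤ 1) (u : X → ℝ) (hu : ∀ z ∈ K \ Ω, IntegrableOn u Ω (μ z))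
    (hbc : ∀ z ∈ K \ Ω, u z ≤ ∫ x in Ω, u x ∂(μ z))
    {c : ℝ} (hc : 0 < c) (hmax : ∀ x ∈ Ω, u x ≤ c) (hatt : ∃ x ∈ K, u x = c) :
    ∃ x₀ ∈ Ω, u x₀ = c := by
  obtain ⟨z, hzK, rfl⟩ := hatt
  by_cases hzΩ : z ∈ Ω
  · exact ⟨z, hzΩ, rfl⟩
  · have hz : z ∈ K \ Ω := ⟨hzK, hzΩ⟩
    obtain ⟨x₀, hx₀, hle⟩ :=
      exists_mem_setIntegral_le_of_measure_le_one (hmass z hz) (hu z hz) (hc.trans_le (hbc z hz))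
    exact ⟨x₀, hx₀, (hmax x₀ hx₀).antisymm ((hbc z hz).trans hle)⟩

/-- let `Ω ⊆ ℝ^d` be bounded and open and let `μ` assign to each boundary
point `z ∈ ∂Ω = closure Ω \ Ω` a positive Borel measure supported in `Ω` of total mass at
most `1`. If `u` is continuous on `closure Ω`, satisfies the nonlocal boundary inequality
`u(z) ≤ ∫_Ω u dμ(z)` for all `z ∈ ∂Ω`, and its maximum `c` over `closure Ω` is positive,
then this maximum is attained at some interior point `x₀ ∈ Ω`. -/
theorem interior_maximum_of_nonlocal_boundary_condition
    {d : ℕ} (Ω : Set (EuclideanSpace ℝ (Fin d)))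
    (hΩo : IsOpen Ω) (hΩb : Bornology.IsBounded Ω)
    (μ : EuclideanSpace ℝ (Fin d) → Measure (EuclideanSpace ℝ (Fin d)))
    (hsupp : ∀ z ∈ closure Ω \ Ω, μ z Ωᶜ = 0)
    (hmass : ∀ z ∈ closure Ω \ Ω, μ z Set.univ ≤ 1)
    (u : EuclideanSpace ℝ (Fin d) → ℝ) (hu : ContinuousOn u (closure Ω))
    (hbc : ∀ z ∈ closure Ω \ Ω, u z ≤ ∫ x in Ω, u x ∂(μ z))
    (c : ℝ) (hc : 0 < c) (hmax : ∀ x ∈ closure Ω, u x ≤ c)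
    (hatt : ∃ x ∈ closure Ω, u x = c) :
    ∃ x₀ ∈ Ω, u x₀ = c := by
  have hmassΩ : ∀ z ∈ closure Ω \ Ω, μ z Ω ≤ 1 := fun z hz ↦
    (measure_mono (subset_univ Ω)).trans (hmass z hz)
  exact interior_maximum_of_nonlocal_boundary_condition_general μ hmassΩ u
    (fun z hz ↦ hu.integrableOn_of_subset_isCompact hΩb.isCompact_closure hΩo.measurableSet
      subset_closure ((hmassΩ z hz).trans_lt ENNReal.one_lt_top).ne)
    hbc hc (fun x hx ↦ hmax x (subset_closure hx)) hatt
end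

section
/- Let K be a compact metric space and let T be a bounded positive linear operator on B_b(K). Then the following are equivalent: (i) T is a kernel operator, i.e. there exists a bounded positive kernel k on K with Tf(x) = ∫_K f(y) k(x,dy) for all f ∈ B_b(K) and x ∈ K; (ii) whenever (f_n) is a uniformly bounded sequence in B_b(K) converging pointwise to f ∈ B_b(K), then Tf_n converges pointwise to Tf; (iii) whenever (f_n) is a uniformly bounded increasing sequence of nonnegative functions in B_b(K) converging pointwise to f ∈ B_b(K), then Tf_n converges pointwise to Tf. -/
/-!
(i) ⇒ (ii) is dominated convergence. For (iii) ⇒ (i), continuity along partial sums makes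
`A ↦ T 1_A x` a measure for every `x`, and these measures form a finite kernel `κ`. By construction
`T` and integration against `κ` agree on indicators, hence on simple functions. Both are bounded and
simple functions are uniformly dense among the bounded measurable ones, so the two operators
coincide.
-/

open MeasureTheory ProbabilityTheory Filter Topology

variable {K : Type*} [MetricSpace K] [CompactSpace K] [MeasurableSpace K] [BorelSpace K]

/-- `f` belongs to `B_b(K)`: it is Borel measurable and bounded. -/
def IsBb (f : K → ℝ) : Prop := Measurable f ∧ ∃ C : ℝ, ∀ x, |f x| ≤ C

/-- `T` is a bounded linear operator on `B_b(K)`. -/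
def IsBoundedLinearBb (T : (K → ℝ) → K → ℝ) : Prop :=
  (∀ f, IsBb f → IsBb (T f)) ∧
  (∀ f g, IsBb f → IsBb g → T (f + g) = T f + T g) ∧
  (∀ (c : ℝ) (f), IsBb f → T (c • f) = c • T f) ∧
  (∃ C : ℝ, ∀ f, IsBb f → ∀ C' : ℝ, (∀ x, |f x| ≤ C') → ∀ x, |T f x| ≤ C * C')

/-- `T` is a positive operator on `B_b(K)`. -/
def IsPositiveBb (T : (K → ℝ) → K → ℝ) : Prop :=
  ∀ f, IsBb f → (∀ x, 0 ≤ f x) → ∀ x, 0 ≤ T f x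

/-- `T` is a (positive) kernel operator on `B_b(K)`: it is given by integration against a
bounded positive kernel `k` on `K`. -/
def IsKernelOperator (T : (K → ℝ) → K → ℝ) : Prop :=
  ∃ k : Kernel K K, IsFiniteKernel k ∧ ∀ f, IsBb f → ∀ x, T f x = ∫ y, f y ∂(k x)

theorem hasSum_indicator_iUnion {α ι M : Type*} [AddCommMonoid M] [TopologicalSpace M]
    {A : ι → Set α} (hA : Pairwise (Function.onFun Disjoint A)) (f : α → M) (x : α) :
    HasSum (fun i => (A i).indicator f x) ((⋃ i, A i).indicator f x) := by
  by_cases hx : ∃ i, x ∈ A i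
  · obtain ⟨i, hi⟩ := hx
    rw [Set.indicator_of_mem (Set.mem_iUnion_of_mem i hi), ← Set.indicator_of_mem hi f]
    exact hasSum_single i fun j hj =>
      Set.indicator_of_notMem (Set.disjoint_right.1 (hA hj) hi) f
  · rw [Set.indicator_of_notMem (by rwa [Set.mem_iUnion])]
    simp only [Set.indicator_of_notMem (not_exists.1 hx _)]
    exact hasSum_zero

section BoundedMeasurable

variable {E : Type*} [MeasurableSpace E] {f g : E → ℝ}

theorem IsBb.add (hf : IsBb f) (hg : IsBb g) : IsBb (f + g) := by
  obtain ⟨hf_meas, C, hC⟩ := hf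
  obtain ⟨hg_meas, D, hD⟩ := hg
  exact ⟨hf_meas.add hg_meas, C + D,
    fun x => (abs_add_le (f x) (g x)).trans (add_le_add (hC x) (hD x))⟩

theorem IsBb.const_smul (hf : IsBb f) (c : ℝ) : IsBb (c • f) := by
  obtain ⟨hf_meas, C, hC⟩ := hf
  refine ⟨hf_meas.const_smul c, |c| * C, fun x => ?_⟩
  rw [Pi.smul_apply, smul_eq_mul, abs_mul]
  exact mul_le_mul_of_nonneg_left (hC x) (abs_nonneg c)

theorem IsBb.sub (hf : IsBb f) (hg : IsBb g) : IsBb (f - g) := by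
  rw [sub_eq_add_neg, ← neg_one_smul ℝ g]
  exact hf.add (hg.const_smul (-1))

theorem isBb_simpleFunc (s : SimpleFunc E ℝ) : IsBb s :=
  ⟨s.measurable, s.exists_forall_norm_le⟩

theorem isBb_zero : IsBb (0 : E → ℝ) :=
  isBb_simpleFunc 0

theorem isBb_indicator_one {A : Set E} (hA : MeasurableSet A) : IsBb (A.indicator 1) :=
  ⟨measurable_one.indicator hA, 1,
    fun x => (norm_indicator_le_norm_self (1 : E → ℝ) x).trans_eq norm_one⟩

theorem isBb_sum {ι : Type*} {F : ι → E → ℝ} (hF : ∀ i, IsBb (F i)) (t : Finset ι) :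
    IsBb (∑ i ∈ t, F i) :=
  Finset.sum_induction F IsBb (fun _ _ => IsBb.add) isBb_zero fun i _ => hF i

theorem IsBb.integrable (hf : IsBb f) (μ : Measure E) [IsFiniteMeasure μ] : Integrable f μ := by
  obtain ⟨hf_meas, C, hC⟩ := hf
  exact .of_bound hf_meas.aestronglyMeasurable C (.of_forall hC)

theorem IsBb.exists_simpleFunc_dist_lt (hf : IsBb f) {ε : ℝ} (hε : 0 < ε) :
    ∃ s : SimpleFunc E ℝ, ∀ x, dist (f x) (s x) < ε := by
  obtain ⟨hf_meas, C, hC⟩ := hf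
  have floor_meas : Measurable fun x => ⌊f x / ε⌋ := (hf_meas.div_const ε).floor
  have floor_range : (Set.range fun x => ⌊f x / ε⌋).Finite := by
    refine (Set.finite_Icc ⌊-C / ε⌋ ⌊C / ε⌋).subset (Set.range_subset_iff.2 fun x => ?_)
    obtain ⟨hl, hu⟩ := abs_le.1 (hC x)
    exact ⟨by gcongr, by gcongr⟩
  let floorDiv : SimpleFunc E ℤ :=
    ⟨fun x => ⌊f x / ε⌋, fun _ => floor_meas (measurableSet_singleton _), floor_range⟩
  refine ⟨floorDiv.map fun m : ℤ => ε * m, fun x => ?_⟩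
  calc dist (f x) (ε * ⌊f x / ε⌋)
    _ = |ε * Int.fract (f x / ε)| := by
        rw [Real.dist_eq, Int.fract, mul_sub, mul_div_cancel₀ _ hε.ne']
    _ = ε * Int.fract (f x / ε) := abs_of_nonneg (mul_nonneg hε.le (Int.fract_nonneg _))
    _ < ε := mul_lt_of_lt_one_right hε (Int.fract_lt_one _)

theorem IsBb.exists_simpleFunc_tendstoUniformly (hf : IsBb f) :
    ∃ s : ℕ → SimpleFunc E ℝ, TendstoUniformly (fun n => ⇑(s n)) f atTop := by
  choose s hs using fun n : ℕ => hf.exists_simpleFunc_dist_lt (Nat.one_div_pos_of_nat (n := n))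
  refine ⟨s, Metric.tendstoUniformly_iff.2 fun ε hε => ?_⟩
  filter_upwards [tendsto_one_div_add_atTop_nhds_zero_nat.eventually_lt_const hε] with n hn x
  exact (hs n x).trans hn

end BoundedMeasurable

section BoundedLinear

variable {E : Type*} [MeasurableSpace E] {S T : (E → ℝ) → E → ℝ}

theorem IsBoundedLinearBb.map_zero (hT : IsBoundedLinearBb T) : T 0 = 0 := by
  simpa only [zero_smul] using hT.2.2.1 0 0 isBb_zero

theorem IsBoundedLinearBb.map_sub (hT : IsBoundedLinearBb T) {f g : E → ℝ} (hf : IsBb f)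
    (hg : IsBb g) : T (f - g) = T f - T g := by
  rw [sub_eq_add_neg, ← neg_one_smul ℝ g, hT.2.1 f _ hf (hg.const_smul (-1)), hT.2.2.1 (-1) g hg,
    neg_one_smul, ← sub_eq_add_neg]

theorem IsBoundedLinearBb.map_sum (hT : IsBoundedLinearBb T) {ι : Type*} {F : ι → E → ℝ}
    (hF : ∀ i, IsBb (F i)) (t : Finset ι) : T (∑ i ∈ t, F i) = ∑ i ∈ t, T (F i) := by
  induction t using Finset.cons_induction with
  | empty => exact hT.map_zero
  | cons i t hi ih =>
    rw [Finset.sum_cons, Finset.sum_cons, hT.2.1 _ _ (hF i) (isBb_sum hF t), ih]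

theorem IsBoundedLinearBb.tendsto_of_tendstoUniformly (hT : IsBoundedLinearBb T) {ι : Type*}
    {l : Filter ι} {F : ι → E → ℝ} {f : E → ℝ} (hF : ∀ i, IsBb (F i)) (hf : IsBb f)
    (hlim : TendstoUniformly F f l) (x : E) : Tendsto (fun i => T (F i) x) l (𝓝 (T f x)) := by
  obtain ⟨C, hC⟩ := hT.2.2.2
  refine Metric.tendsto_nhds.2 fun ε hε => ?_
  have hC_pos : 0 < |C| + 1 := by positivity
  filter_upwards [Metric.tendstoUniformly_iff.1 hlim _ (div_pos hε hC_pos)] with i hi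
  calc dist (T (F i) x) (T f x)
    _ = |T (f - F i) x| := by
        rw [dist_comm, Real.dist_eq, hT.map_sub hf (hF i), Pi.sub_apply]
    _ ≤ C * (ε / (|C| + 1)) := hC _ (hf.sub (hF i)) _ (fun y => (hi y).le) x
    _ < (|C| + 1) * (ε / (|C| + 1)) := by gcongr; linarith [le_abs_self C]
    _ = ε := mul_div_cancel₀ ε hC_pos.ne'

theorem IsBoundedLinearBb.eq_on_simpleFunc (hS : IsBoundedLinearBb S) (hT : IsBoundedLinearBb T)
    (h : ∀ A, MeasurableSet A → S (A.indicator 1) = T (A.indicator 1)) (s : SimpleFunc E ℝ) :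
    S s = T s := by
  induction s using SimpleFunc.induction with
  | const c hA =>
    have indicator_eq_smul : ∀ A : Set E, A.indicator (Function.const E c) = c • A.indicator 1 :=
      fun A => by ext y; by_cases hy : y ∈ A <;> simp [hy]
    simp only [SimpleFunc.coe_piecewise, SimpleFunc.coe_const,
      Function.const_zero, Set.piecewise_eq_indicator, indicator_eq_smul]
    rw [hS.2.2.1 c _ (isBb_indicator_one hA), hT.2.2.1 c _ (isBb_indicator_one hA), h _ hA]
  | add _ hs ht =>
    rw [SimpleFunc.coe_add, hS.2.1 _ _ (isBb_simpleFunc _) (isBb_simpleFunc _),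
      hT.2.1 _ _ (isBb_simpleFunc _) (isBb_simpleFunc _), hs, ht]

theorem IsBoundedLinearBb.ext_indicator (hS : IsBoundedLinearBb S) (hT : IsBoundedLinearBb T)
    (h : ∀ A, MeasurableSet A → S (A.indicator 1) = T (A.indicator 1)) {f : E → ℝ}
    (hf : IsBb f) : S f = T f := by
  obtain ⟨s, hs⟩ := hf.exists_simpleFunc_tendstoUniformly
  ext x
  have hSs := hS.tendsto_of_tendstoUniformly (fun n => isBb_simpleFunc (s n)) hf hs x
  have hTs := hT.tendsto_of_tendstoUniformly (fun n => isBb_simpleFunc (s n)) hf hs x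
  simp only [hS.eq_on_simpleFunc hT h] at hSs
  exact tendsto_nhds_unique hSs hTs

theorem isBoundedLinearBb_integral (κ : Kernel E E) [IsFiniteKernel κ] :
    IsBoundedLinearBb fun f x => ∫ y, f y ∂κ x := by
  have abs_integral_le : ∀ (f : E → ℝ) (C : ℝ), (∀ y, |f y| ≤ C) →
      ∀ x, |∫ y, f y ∂κ x| ≤ κ.bound.toReal * C := fun f C hC x => by
    have hC_nonneg : 0 ≤ C := (abs_nonneg (f x)).trans (hC x)
    calc |∫ y, f y ∂κ x|
      _ ≤ C * (κ x).real Set.univ :=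
          norm_integral_le_of_norm_le_const (f := f) (.of_forall hC)
      _ ≤ C * κ.bound.toReal := by
          gcongr
          exact ENNReal.toReal_mono κ.bound_ne_top (κ.measure_le_bound x _)
      _ = κ.bound.toReal * C := mul_comm _ _
  refine ⟨fun f ⟨hf_meas, C, hC⟩ => ?_, fun f g hf hg => ?_, fun c f _ => ?_,
    κ.bound.toReal, fun f _ => abs_integral_le f⟩
  · exact ⟨hf_meas.stronglyMeasurable.integral_kernel.measurable, _, abs_integral_le f C hC⟩
  · ext x
    exact integral_add (hf.integrable _) (hg.integrable _)
  · ext x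
    exact integral_const_mul c f

end BoundedLinear

section Continuity

variable {E : Type*} [MeasurableSpace E] {T : (E → ℝ) → E → ℝ}

/-- Condition (ii): `T` preserves pointwise convergence of uniformly bounded sequences in
`B_b(E)`. -/
def IsPointwiseContinuousBb (T : (E → ℝ) → E → ℝ) : Prop :=
  ∀ (f : ℕ → E → ℝ) (g : E → ℝ), (∀ n, IsBb (f n)) → IsBb g →
    (∃ C : ℝ, ∀ n x, |f n x| ≤ C) →
    (∀ x, Tendsto (fun n => f n x) atTop (𝓝 (g x))) →
    ∀ x, Tendsto (fun n => T (f n) x) atTop (𝓝 (T g x))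

/-- Condition (iii): `T` preserves pointwise convergence of uniformly bounded increasing sequences
of nonnegative functions in `B_b(E)`. -/
def IsMonotoneContinuousBb (T : (E → ℝ) → E → ℝ) : Prop :=
  ∀ (f : ℕ → E → ℝ) (g : E → ℝ), (∀ n, IsBb (f n)) → IsBb g →
    (∀ n x, 0 ≤ f n x) → (∀ n x, f n x ≤ f (n + 1) x) →
    (∃ C : ℝ, ∀ n x, |f n x| ≤ C) →
    (∀ x, Tendsto (fun n => f n x) atTop (𝓝 (g x))) →
    ∀ x, Tendsto (fun n => T (f n) x) atTop (𝓝 (T g x))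

theorem IsPointwiseContinuousBb.isMonotoneContinuousBb (hT : IsPointwiseContinuousBb T) :
    IsMonotoneContinuousBb T :=
  fun f g hf hg _ _ => hT f g hf hg

theorem IsKernelOperator.isPointwiseContinuousBb (hT : IsKernelOperator T) :
    IsPointwiseContinuousBb T := by
  obtain ⟨κ, _, hκ⟩ := hT
  rintro f g hf hg ⟨C, hC⟩ hlim x
  simp only [hκ _ (hf _), hκ g hg]
  exact tendsto_integral_of_dominated_convergence (fun _ => C)
    (fun n => (hf n).1.aestronglyMeasurable) (integrable_const C)
    (fun n => .of_forall (hC n)) (.of_forall hlim)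

theorem IsMonotoneContinuousBb.hasSum (hT : IsMonotoneContinuousBb T)
    (hlin : IsBoundedLinearBb T) (hpos : IsPositiveBb T) {F : ℕ → E → ℝ} {g : E → ℝ}
    (hF : ∀ i, IsBb (F i)) (hF_nonneg : ∀ i x, 0 ≤ F i x) (hg : IsBb g)
    (hsum : ∀ x, HasSum (fun i => F i x) (g x)) (x : E) :
    HasSum (fun i => T (F i) x) (T g x) := by
  rw [hasSum_iff_tendsto_nat_of_nonneg fun i => hpos _ (hF i) (hF_nonneg i) x]
  simp only [← Finset.sum_apply x _ fun i => T (F i), ← hlin.map_sum hF]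
  obtain ⟨C, hC⟩ := hg.2
  have sum_nonneg : ∀ n x, 0 ≤ (∑ i ∈ Finset.range n, F i) x := fun n x => by
    rw [Finset.sum_apply]
    exact Finset.sum_nonneg fun i _ => hF_nonneg i x
  refine hT _ g (fun n => isBb_sum hF _) hg sum_nonneg (fun n x => ?_) ⟨C, fun n x => ?_⟩
    (fun x => ?_) x
  · simp only [Finset.sum_range_succ, Pi.add_apply]
    exact le_add_of_nonneg_right (hF_nonneg n x)
  · rw [abs_of_nonneg (sum_nonneg n x), Finset.sum_apply]
    exact (sum_le_hasSum _ (fun i _ => hF_nonneg i x) (hsum x)).trans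
      ((le_abs_self _).trans (hC x))
  · simpa only [Finset.sum_apply] using (hsum x).tendsto_sum_nat

theorem IsMonotoneContinuousBb.exists_measure (hT : IsMonotoneContinuousBb T)
    (hlin : IsBoundedLinearBb T) (hpos : IsPositiveBb T) (x : E) :
    ∃ μ : Measure E, ∀ A, MeasurableSet A → μ A = ENNReal.ofReal (T (A.indicator 1) x) := by
  refine ⟨Measure.ofMeasurable (fun A _ => ENNReal.ofReal (T (A.indicator 1) x)) ?_ ?_,
    fun A => Measure.ofMeasurable_apply A⟩
  · rw [Set.indicator_empty', hlin.map_zero, Pi.zero_apply, ENNReal.ofReal_zero]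
  · intro A hA hdisj
    have indicator_nonneg : ∀ i y, 0 ≤ (A i).indicator (1 : E → ℝ) y :=
      fun i => Set.indicator_nonneg fun _ _ => zero_le_one
    have hsum := hT.hasSum hlin hpos (fun i => isBb_indicator_one (hA i)) indicator_nonneg
      (isBb_indicator_one (.iUnion hA)) (hasSum_indicator_iUnion hdisj 1) x
    rw [← hsum.tsum_eq, ENNReal.ofReal_tsum_of_nonneg
      (fun i => hpos _ (isBb_indicator_one (hA i)) (indicator_nonneg i) x) hsum.summable]

theorem IsMonotoneContinuousBb.exists_kernel (hT : IsMonotoneContinuousBb T)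
    (hlin : IsBoundedLinearBb T) (hpos : IsPositiveBb T) :
    ∃ κ : Kernel E E, IsFiniteKernel κ ∧
      ∀ x A, MeasurableSet A → (κ x).real A = T (A.indicator 1) x := by
  choose μ hμ using hT.exists_measure hlin hpos
  have μ_meas : Measurable μ := Measure.measurable_of_measurable_coe _ fun A hA => by
    simp only [hμ _ A hA]
    exact (hlin.1 _ (isBb_indicator_one hA)).1.ennreal_ofReal
  obtain ⟨_, C, hC⟩ := hlin.1 _ (isBb_indicator_one .univ)
  refine ⟨⟨μ, μ_meas⟩, ⟨ENNReal.ofReal C, ENNReal.ofReal_lt_top, fun x => ?_⟩, fun x A hA => ?_⟩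
  · exact (hμ x _ .univ).trans_le (ENNReal.ofReal_le_ofReal ((le_abs_self _).trans (hC x)))
  · have apply_nonneg : 0 ≤ T (A.indicator 1) x :=
      hpos _ (isBb_indicator_one hA) (Set.indicator_nonneg fun _ _ => zero_le_one) x
    exact (congrArg ENNReal.toReal (hμ x A hA)).trans (ENNReal.toReal_ofReal apply_nonneg)

theorem IsMonotoneContinuousBb.isKernelOperator (hT : IsMonotoneContinuousBb T)
    (hlin : IsBoundedLinearBb T) (hpos : IsPositiveBb T) : IsKernelOperator T := by
  obtain ⟨κ, hκ_fin, hκ⟩ := hT.exists_kernel hlin hpos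
  have eq_on_indicator : ∀ A, MeasurableSet A →
      T (A.indicator 1) = fun x => ∫ y, A.indicator 1 y ∂κ x := fun A hA => by
    ext x
    rw [integral_indicator_one hA, hκ x A hA]
  exact ⟨κ, hκ_fin, fun f hf x =>
    congrFun (hlin.ext_indicator (isBoundedLinearBb_integral κ) eq_on_indicator hf) x⟩

theorem kernel_operator_iff_pointwise_continuous_general (hlin : IsBoundedLinearBb T)
    (hpos : IsPositiveBb T) :
    (IsKernelOperator T ↔ IsPointwiseContinuousBb T) ∧
      (IsKernelOperator T ↔ IsMonotoneContinuousBb T) := by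
  have kernel_of_monotone : IsMonotoneContinuousBb T → IsKernelOperator T :=
    fun hT => hT.isKernelOperator hlin hpos
  exact ⟨⟨fun hT => hT.isPointwiseContinuousBb,
      fun hT => kernel_of_monotone hT.isMonotoneContinuousBb⟩,
    ⟨fun hT => hT.isPointwiseContinuousBb.isMonotoneContinuousBb, kernel_of_monotone⟩⟩

end Continuity

/-- a bounded positive linear operator on `B_b(K)` is a kernel operator iff it
is pointwise continuous along uniformly bounded pointwise convergent sequences, iff it is
pointwise continuous along uniformly bounded increasing sequences of nonnegative functions. -/
theorem kernel_operator_iff_pointwise_continuous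
    (T : (K → ℝ) → K → ℝ) (hlin : IsBoundedLinearBb T) (hpos : IsPositiveBb T) :
    (IsKernelOperator T ↔
      (∀ (f : ℕ → K → ℝ) (g : K → ℝ), (∀ n, IsBb (f n)) → IsBb g →
        (∃ C : ℝ, ∀ n x, |f n x| ≤ C) →
        (∀ x, Tendsto (fun n => f n x) atTop (𝓝 (g x))) →
        ∀ x, Tendsto (fun n => T (f n) x) atTop (𝓝 (T g x)))) ∧
    (IsKernelOperator T ↔
      (∀ (f : ℕ → K → ℝ) (g : K → ℝ), (∀ n, IsBb (f n)) → IsBb g →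
        (∀ n x, 0 ≤ f n x) → (∀ n x, f n x ≤ f (n + 1) x) →
        (∃ C : ℝ, ∀ n x, |f n x| ≤ C) →
        (∀ x, Tendsto (fun n => f n x) atTop (𝓝 (g x))) →
        ∀ x, Tendsto (fun n => T (f n) x) atTop (𝓝 (T g x)))) :=
  kernel_operator_iff_pointwise_continuous_general hlin hpos
end
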